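/- Support of multiplication coefficients: assume axiom (C0): there exists a regular dominant ρ' ∈ V₀ such that for every λ ∈ Λ₊ there is a unique p ∈ P^W of degree ℓ(λ) with p(ρ'+μ) = δ_{λμ} for all μ ∈ Λ₊ with ℓ(μ) ≤ ℓ(λ). Let ρ ∈ V₀ be dominant. Then for every h ∈ P^W, μ ∈ Λ₊ and η ∈ Γ^∨, one has a_η^h(μ) = 0 unless η ∈ Λ and ℓ(η) ≤ deg h. -/

import Mathlib

/-
Common framework for F. Knop, "Construction of Commuting Difference Operators
for Multiplicity Free Spaces".

We identify `Γ` with `ι → ℤ` via its basis `Σ` (so `Σ` is the standard basis),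
`Γ^∨` with `ι → ℤ` via the dual basis `Σ^∨`, and `V = Hom(Γ, ℂ)` with `ι → ℂ`.
-/

open scoped BigOperators Classical
open MvPolynomial

noncomputable section

namespace Knop

variable {ι : Type*} [Fintype ι] [DecidableEq ι]

/-- The `i`-th element of the basis `Σ` of `Γ` (resp. of `Σ^∨ ⊆ Γ^∨`), in coordinates. -/
def e (i : ι) : ι → ℤ := Pi.single i 1

/-- The pairing between `Γ` and `Γ^∨` (in coordinates, the dot product);
`pairZ γ η = γ(η) = η(γ)`. -/
def pairZ (γ η : ι → ℤ) : ℤ := ∑ i, γ i * η i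

/-- Evaluation of `γ ∈ Γ` as a linear function on `V = Hom(Γ,ℂ) ≅ ι → ℂ`. -/
def evalC (γ : ι → ℤ) (z : ι → ℂ) : ℂ := ∑ i, (γ i : ℂ) * z i

/-- The embedding `Γ^∨ ⊆ V`. -/
def toV (η : ι → ℤ) : ι → ℂ := fun i => (η i : ℂ)

/-- The action of `w ∈ Aut(Γ)` on `V = Hom(Γ, ℂ)`: `(w • z)(γ) = z(w⁻¹ γ)`, in coordinates. -/
def actV (w : (ι → ℤ) ≃ₗ[ℤ] (ι → ℤ)) (z : ι → ℂ) : ι → ℂ :=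
  fun i => evalC (w.symm (e i)) z

/-- The action of `w ∈ Aut(Γ)` on `Γ^∨ = Hom(Γ, ℤ)`: `(w • η)(γ) = η(w⁻¹ γ)`. -/
def actDual (w : (ι → ℤ) ≃ₗ[ℤ] (ι → ℤ)) (η : ι → ℤ) : ι → ℤ :=
  fun i => pairZ (w.symm (e i)) η

/-- `Λ₊`, the `ℕ`-span of `Σ^∨` inside `Γ^∨`. -/
def LamPlus : Set (ι → ℤ) := {η | ∀ i, 0 ≤ η i}

/-- The reflection `s_α(x) = x - α^∨(x)·α` attached to a root `α` with coroot `αv`. -/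
def reflMap (α αv : ι → ℤ) : (ι → ℤ) → (ι → ℤ) := fun x => x - pairZ x αv • α

/-- The data `(Γ, Σ, W, ℓ)` together with the axioms C1–C8 of Knop's paper
(in the coordinates given by `Σ`).  The root system `Δ` of `W`, the set
`Φ = W·Σ`, and `Λ₁ = W·Σ^∨₁` are carried along as `Finset`s with their
defining specifications. -/
structure Data (ι : Type*) [Fintype ι] [DecidableEq ι] where
  /-- the reflection group `W ⊆ Aut(Γ)` -/
  W : Subgroup ((ι → ℤ) ≃ₗ[ℤ] (ι → ℤ))
  /-- `W` is finite -/
  W_finite : (W : Set ((ι → ℤ) ≃ₗ[ℤ] (ι → ℤ))).Finite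
  /-- the element `ℓ ∈ Γ` -/
  ell : ι → ℤ
  /-- the set of roots `Δ ⊆ Γ` of `W` -/
  Δ : Finset (ι → ℤ)
  /-- the coroot `α^∨ ∈ Γ^∨` of a root `α` -/
  coroot : (ι → ℤ) → (ι → ℤ)
  /-- `Φ = W·Σ` -/
  Φ : Finset (ι → ℤ)
  /-- `Λ₁ = W·Σ^∨₁` -/
  Λ₁ : Finset (ι → ℤ)
  Φ_spec : ∀ ω, ω ∈ Φ ↔ ∃ w ∈ W, ∃ i, ω = w (e i)
  Λ₁_spec : ∀ η, η ∈ Λ₁ ↔ ∃ w ∈ W, ∃ i, ell i = 1 ∧ η = actDual w (e i)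
  /-- `Δ = -Δ` -/
  Δ_neg : ∀ α ∈ Δ, -α ∈ Δ
  /-- every root is a primitive vector of `Γ` -/
  Δ_prim : ∀ α ∈ Δ, ∀ (n : ℤ) (β : ι → ℤ), α = n • β → IsUnit n
  /-- the reflection `s_α` belongs to `W` -/
  refl_mem : ∀ α ∈ Δ, ∃ w ∈ W, ∀ x, w x = reflMap α (coroot α) x
  /-- `α^∨(α) = 2` -/
  coroot_pair : ∀ α ∈ Δ, pairZ α (coroot α) = 2
  /-- C1: `W` is generated by the reflections `s_α`, `α ∈ Δ` -/
  C1 : W ≤ Subgroup.closure {w : (ι → ℤ) ≃ₗ[ℤ] (ι → ℤ) |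
        ∃ α ∈ Δ, ∀ x, w x = reflMap α (coroot α) x}
  /-- C2: `Δ = Δ⁺ ∪ (-Δ⁺)` -/
  C2 : ∀ α ∈ Δ, (∀ i, 0 ≤ α i) ∨ (∀ i, α i ≤ 0)
  /-- C3: `Φ ⊆ Φ⁺ ∪ (-Φ⁺)` -/
  C3 : ∀ ω ∈ Φ, (∀ i, 0 ≤ ω i) ∨ (∀ i, ω i ≤ 0)
  /-- C4: `ℓ ∈ Γ^W` -/
  C4 : ∀ w ∈ W, w ell = ell
  /-- C5: `Σ_{ω ∈ Φ⁺} ω - Σ_{α ∈ Δ⁺} α = ℓ` -/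
  C5 : (∑ ω ∈ Φ.filter (fun ω => ∀ i, 0 ≤ ω i), ω)
        - (∑ α ∈ Δ.filter (fun α => ∀ i, 0 ≤ α i), α) = ell
  /-- C6: `ℓ(η) > 0` for all `η ∈ Σ^∨` -/
  C6 : ∀ i, 0 < ell i
  /-- C7: `ω(η) ∈ {-1,0,1}` for `η ∈ Σ^∨₁` and `ω ∈ Δ ∪ Φ` -/
  C7 : ∀ i, ell i = 1 → ∀ ω, (ω ∈ Δ ∨ ω ∈ Φ) → ω i = -1 ∨ ω i = 0 ∨ ω i = 1
  /-- C8: a `W`-invariant linear function on `V` is determined by its restriction to `Σ^∨₁` -/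
  C8 : ∀ c c' : ι → ℂ,
    (∀ w ∈ W, ∀ z : ι → ℂ, ∑ i, c i * actV w z i = ∑ i, c i * z i) →
    (∀ w ∈ W, ∀ z : ι → ℂ, ∑ i, c' i * actV w z i = ∑ i, c' i * z i) →
    (∀ i, ell i = 1 → c i = c' i) → c = c'

namespace Data

variable (D : Data ι)

/-- `Δ⁺`, the positive roots. -/
def Δpos : Finset (ι → ℤ) := D.Δ.filter fun α => ∀ i, 0 ≤ α i

/-- `Φ⁺`. -/
def Φpos : Finset (ι → ℤ) := D.Φ.filter fun ω => ∀ i, 0 ≤ ω i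

/-- The submonoid `Λ` of `Γ^∨` generated by `Λ₁`. -/
def Lam : AddSubmonoid (ι → ℤ) := AddSubmonoid.closure (D.Λ₁ : Set (ι → ℤ))

/-- `ρ ∈ V₀`: `ω₁(ρ) = ω₂(ρ)` whenever `ω₁, ω₂ ∈ Σ` lie in the same `±W`-orbit. -/
def InV0 (ρ : ι → ℂ) : Prop :=
  ∀ i j : ι, (∃ w ∈ D.W, e i = w (e j) ∨ e i = -(w (e j))) → ρ i = ρ j

/-- `k` is the multiplicity-parameter function of `ρ ∈ V₀`:
`k_ω = ω₁(ρ)` for any `ω₁ ∈ (±W)·ω ∩ Σ`. -/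
def IsK (ρ : ι → ℂ) (k : (ι → ℤ) → ℂ) : Prop :=
  ∀ (ω : ι → ℤ) (i : ι), (∃ w ∈ D.W, e i = w ω ∨ e i = -(w ω)) → k ω = ρ i

/-- `ρ` is dominant: `α(ρ) ∉ {-1,-2,…}` for all `α ∈ Δ⁺`. -/
def Dominant (ρ : ι → ℂ) : Prop :=
  ∀ α ∈ D.Δpos, ∀ n : ℕ, evalC α ρ ≠ -((n : ℂ) + 1)

/-- `ρ` is regular: `α(ρ) ≠ 0` for all `α ∈ Δ⁺`. -/
def Regular (ρ : ι → ℂ) : Prop :=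
  ∀ α ∈ D.Δpos, evalC α ρ ≠ 0

/-- `ρ` is non-integral: `α(ρ) ∉ ℤ` for all `α ∈ Δ`. -/
def NonIntegral (ρ : ι → ℂ) : Prop :=
  ∀ α ∈ D.Δ, ∀ n : ℤ, evalC α ρ ≠ (n : ℂ)

/-- `ρ` is strongly dominant (`k` being the parameter function of `ρ`). -/
def StronglyDominant (ρ : ι → ℂ) (k : (ι → ℤ) → ℂ) : Prop :=
  D.Regular ρ ∧ D.Dominant ρ ∧
    ∀ ω ∈ D.Φpos, (∀ n : ℕ, evalC ω ρ - k ω ≠ -((n : ℂ) + 1)) ∧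
      (∀ n : ℕ, evalC ω ρ + k ω ≠ -(n : ℂ))

/-- The rational function `f_η`, `η ∈ Λ₁`. -/
def f (k : (ι → ℤ) → ℂ) (η : ι → ℤ) (z : ι → ℂ) : ℂ :=
  (∏ ω ∈ D.Φ.filter (fun ω => 0 < pairZ ω η), (evalC ω z - k ω)) /
  (∏ α ∈ D.Δ.filter (fun α => 0 < pairZ α η), evalC α z)

/-- The value at `z` of `L(p) = Σ_{η ∈ Λ₁} f_η T_η (p)`. -/
def Lval (k : (ι → ℤ) → ℂ) (p : MvPolynomial ι ℂ) (z : ι → ℂ) : ℂ :=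
  ∑ η ∈ D.Λ₁, D.f k η z * eval (z - toV η) p

/-- `W`-invariance of a polynomial function on `V`. -/
def WInv (p : MvPolynomial ι ℂ) : Prop :=
  ∀ w ∈ D.W, ∀ z : ι → ℂ, eval (actV w z) p = eval z p

/-- The defining property of the Capelli polynomial `p_λ` (with shift `ρ`):
`p` is `W`-invariant of degree `≤ ℓ(λ)` and `p(ρ+μ) = δ_{λμ}` for all
`μ ∈ Λ₊` with `ℓ(μ) ≤ ℓ(λ)`. -/
def CapelliAt (ρ : ι → ℂ) (lam : ι → ℤ) (p : MvPolynomial ι ℂ) : Prop :=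
  D.WInv p ∧ (p.totalDegree : ℤ) ≤ pairZ D.ell lam ∧
    ∀ μ : ι → ℤ, μ ∈ LamPlus → pairZ D.ell μ ≤ pairZ D.ell lam →
      eval (ρ + toV μ) p = if μ = lam then 1 else 0

/-- Axiom C0: for some regular dominant `ρ' ∈ V₀` and every `λ ∈ Λ₊` there is a
unique `W`-invariant polynomial of degree `ℓ(λ)` with `p(ρ'+μ) = δ_{λμ}` for all
`μ ∈ Λ₊` with `ℓ(μ) ≤ ℓ(λ)`. -/
def C0 : Prop :=
  ∃ ρ' : ι → ℂ, D.InV0 ρ' ∧ D.Regular ρ' ∧ D.Dominant ρ' ∧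
    ∀ lam : ι → ℤ, lam ∈ LamPlus →
      ∃! p : MvPolynomial ι ℂ, D.WInv p ∧
        p.totalDegree = (pairZ D.ell lam).toNat ∧
        ∀ μ : ι → ℤ, μ ∈ LamPlus → pairZ D.ell μ ≤ pairZ D.ell lam →
          eval (ρ' + toV μ) p = if μ = lam then 1 else 0

end Data

/-- The `m`-th point `τ_m` of the path starting at `lam` with step sequence `s`
(steps are meant to lie in `Λ₁`). -/
def pathPt (lam : ι → ℤ) {d : ℕ} (s : Fin d → ι → ℤ) (m : ℕ) : ι → ℤ :=
  lam + ∑ i ∈ Finset.univ.filter (fun i : Fin d => (i : ℕ) < m), s i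

/-- All paths of length `d` from `lam` to `mu` (with steps in `Λ₁`), encoded by
their step sequences. -/
def paths (D : Data ι) (lam mu : ι → ℤ) (d : ℕ) : Finset (Fin d → ι → ℤ) :=
  (Fintype.piFinset fun _ : Fin d => D.Λ₁).filter fun s => pathPt lam s d = mu

/-- All positive paths of length `d` from `lam` to `mu`. -/
def posPaths (D : Data ι) (lam mu : ι → ℤ) (d : ℕ) : Finset (Fin d → ι → ℤ) :=
  (Fintype.piFinset fun _ : Fin d => D.Λ₁).filter fun s =>
    (∀ m ≤ d, pathPt lam s m ∈ LamPlus) ∧ pathPt lam s d = mu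

/-- The falling factorial `[x ↓ d] = x(x-1)⋯(x-d+1)`. -/
def ffall (x : ℂ) (d : ℤ) : ℂ := ∏ j ∈ Finset.range d.toNat, (x - (j : ℂ))

namespace Data

variable (D : Data ι)

/-- The generalized rational function `f_τ`, `τ ∈ Λ` (formula (Def-f-l)). -/
def fgen (k : (ι → ℤ) → ℂ) (τ : ι → ℤ) (z : ι → ℂ) : ℂ :=
  (∏ ω ∈ D.Φ.filter (fun ω => 0 < pairZ ω τ), ffall (evalC ω z - k ω) (pairZ ω τ)) /
  (∏ α ∈ D.Δ.filter (fun α => 0 < pairZ α τ), ffall (evalC α z) (pairZ α τ))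

/-- The virtual dimension `d_λ = (-1)^{ℓ(λ)} f_λ(-ρ) / f_λ(ρ+λ)`. -/
def vdim (k : (ι → ℤ) → ℂ) (ρ : ι → ℂ) (lam : ι → ℤ) : ℂ :=
  (-1 : ℂ) ^ (pairZ D.ell lam) * D.fgen k lam (-ρ) / D.fgen k lam (ρ + toV lam)

/-- The rational function `b_τ^h` (formula (Def-b-t)); here the sum runs over
all paths from `0` to `τ` of length `d = ℓ(τ)`. -/
def bfun (k : (ι → ℤ) → ℂ) (h : MvPolynomial ι ℂ) (τ : ι → ℤ) (z : ι → ℂ) : ℂ :=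
  ∑ s ∈ paths D 0 τ (pairZ D.ell τ).toNat,
    (∑ i ∈ Finset.range ((pairZ D.ell τ).toNat + 1),
      ((-1 : ℂ) ^ ((pairZ D.ell τ).toNat - i) /
        ((Nat.factorial i : ℂ) * (Nat.factorial ((pairZ D.ell τ).toNat - i) : ℂ))) *
        eval (z - toV (pathPt 0 s i)) h) *
    ∏ i : Fin (pairZ D.ell τ).toNat, D.fgen k (s i) (z - toV (pathPt 0 s (i : ℕ)))

/-- The difference operator `D_h = Σ_{τ ∈ Λ} b_τ^h T_τ`, acting on functions on `V`. -/
def Dop (k : (ι → ℤ) → ℂ) (h : MvPolynomial ι ℂ) (F : (ι → ℂ) → ℂ) (z : ι → ℂ) : ℂ :=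
  ∑ᶠ τ ∈ (D.Lam : Set (ι → ℤ)), D.bfun k h τ z * F (z - toV τ)

/-- The order relation on `Λ`: `τ₁ ≤ τ₂` iff `ℓ(τ₁) < ℓ(τ₂)`, or
`ℓ(τ₁) = ℓ(τ₂)` and `τ₂ - τ₁` is a sum of positive coroots. -/
def ordLe (τ₁ τ₂ : ι → ℤ) : Prop :=
  pairZ D.ell τ₁ < pairZ D.ell τ₂ ∨
    (pairZ D.ell τ₁ = pairZ D.ell τ₂ ∧
      τ₂ - τ₁ ∈ AddSubmonoid.closure (D.coroot '' (D.Δpos : Set (ι → ℤ))))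

end Data


set_option linter.unusedSectionVars false
set_option linter.unusedSimpArgs false

/-! ### Pairings and actions -/

lemma pairZ_add_left (a b η : ι → ℤ) : pairZ (a + b) η = pairZ a η + pairZ b η := by
  simp [pairZ, add_mul, Finset.sum_add_distrib]

lemma pairZ_add_right (a η θ : ι → ℤ) : pairZ a (η + θ) = pairZ a η + pairZ a θ := by
  simp [pairZ, mul_add, Finset.sum_add_distrib]

lemma pairZ_sub_right (a η θ : ι → ℤ) : pairZ a (η - θ) = pairZ a η - pairZ a θ := by
  simp [pairZ, mul_sub, Finset.sum_sub_distrib]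

lemma pairZ_neg_left (a η : ι → ℤ) : pairZ (-a) η = - pairZ a η := by
  simp [pairZ]

lemma pairZ_smul_left (n : ℤ) (a η : ι → ℤ) : pairZ (n • a) η = n * pairZ a η := by
  simp [pairZ, Finset.mul_sum, mul_assoc]

lemma pairZ_e_left (i : ι) (η : ι → ℤ) : pairZ (e i) η = η i := by
  simp [pairZ, e, Pi.single_apply]

lemma pairZ_e_right (a : ι → ℤ) (i : ι) : pairZ a (e i) = a i := by
  simp [pairZ, e, Pi.single_apply]

lemma evalC_add_left (a b : ι → ℤ) (z : ι → ℂ) : evalC (a + b) z = evalC a z + evalC b z := by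
  simp [evalC, add_mul, Finset.sum_add_distrib]

lemma evalC_neg_left (a : ι → ℤ) (z : ι → ℂ) : evalC (-a) z = - evalC a z := by
  simp [evalC]

lemma evalC_smul_left (n : ℤ) (a : ι → ℤ) (z : ι → ℂ) : evalC (n • a) z = n * evalC a z := by
  simp [evalC, Finset.mul_sum, mul_assoc]

lemma evalC_sub_left (a b : ι → ℤ) (z : ι → ℂ) : evalC (a - b) z = evalC a z - evalC b z := by
  simp [evalC, sub_mul, Finset.sum_sub_distrib]

lemma evalC_add_right (a : ι → ℤ) (y z : ι → ℂ) : evalC a (y + z) = evalC a y + evalC a z := by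
  simp [evalC, mul_add, Finset.sum_add_distrib]

lemma evalC_sub_right (a : ι → ℤ) (y z : ι → ℂ) : evalC a (y - z) = evalC a y - evalC a z := by
  simp [evalC, mul_sub, Finset.sum_sub_distrib]

lemma evalC_smul_right (a : ι → ℤ) (c : ℂ) (z : ι → ℂ) : evalC a (c • z) = c * evalC a z := by
  simp [evalC, Finset.mul_sum, mul_left_comm]

lemma evalC_toV (a η : ι → ℤ) : evalC a (toV η) = (pairZ a η : ℂ) := by
  simp [evalC, toV, pairZ]

lemma evalC_e (i : ι) (z : ι → ℂ) : evalC (e i) z = z i := by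
  simp [evalC, e, Pi.single_apply]

lemma toV_sub (η θ : ι → ℤ) : toV (η - θ) = toV η - toV θ := by
  ext i; simp [toV]

lemma toV_add (η θ : ι → ℤ) : toV (η + θ) = toV η + toV θ := by
  ext i; simp [toV]

lemma vec_eq_sum (x : ι → ℤ) : x = ∑ i, x i • e i := by
  ext j; simp [e, Finset.sum_apply, Pi.single_apply]

lemma evalC_actV (w : (ι → ℤ) ≃ₗ[ℤ] (ι → ℤ)) (a : ι → ℤ) (z : ι → ℂ) :
    evalC a (actV w z) = evalC (w.symm a) z := by
  have h : ∀ s : Finset ι, ∀ x : ι → (ι → ℤ), evalC (∑ i ∈ s, x i) z = ∑ i ∈ s, evalC (x i) z := by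
    intro s x
    induction s using Finset.induction_on with
    | empty => simp [evalC]
    | insert a s ha ih => rw [Finset.sum_insert ha, Finset.sum_insert ha, evalC_add_left, ih]
  conv_rhs => rw [vec_eq_sum a, map_sum, h]
  simp only [map_smul, evalC_smul_left]
  rfl

lemma pairZ_actDual (w : (ι → ℤ) ≃ₗ[ℤ] (ι → ℤ)) (a : ι → ℤ) (η : ι → ℤ) :
    pairZ a (actDual w η) = pairZ (w.symm a) η := by
  have h : ∀ s : Finset ι, ∀ x : ι → (ι → ℤ), pairZ (∑ i ∈ s, x i) η = ∑ i ∈ s, pairZ (x i) η := by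
    intro s x
    induction s using Finset.induction_on with
    | empty => simp [pairZ]
    | insert a s ha ih => rw [Finset.sum_insert ha, Finset.sum_insert ha, pairZ_add_left, ih]
  conv_rhs => rw [vec_eq_sum a, map_sum, h]
  simp only [map_smul, pairZ_smul_left]
  rfl

lemma vec_ext_eval {y z : ι → ℂ} (h : ∀ a : ι → ℤ, evalC a y = evalC a z) : y = z := by
  ext i; simpa [evalC_e] using h (e i)

lemma vec_ext_pair {y z : ι → ℤ} (h : ∀ a : ι → ℤ, pairZ a y = pairZ a z) : y = z := by
  ext i; simpa [pairZ_e_left] using h (e i)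

lemma toV_actDual (w : (ι → ℤ) ≃ₗ[ℤ] (ι → ℤ)) (η : ι → ℤ) :
    toV (actDual w η) = actV w (toV η) := by
  apply vec_ext_eval; intro a
  rw [evalC_toV, pairZ_actDual, evalC_actV, evalC_toV]

lemma actV_sub (w : (ι → ℤ) ≃ₗ[ℤ] (ι → ℤ)) (y z : ι → ℂ) :
    actV w (y - z) = actV w y - actV w z := by
  apply vec_ext_eval; intro a
  simp only [evalC_actV, evalC_sub_right]

lemma actV_add (w : (ι → ℤ) ≃ₗ[ℤ] (ι → ℤ)) (y z : ι → ℂ) :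
    actV w (y + z) = actV w y + actV w z := by
  apply vec_ext_eval; intro a
  simp only [evalC_actV, evalC_add_right]

lemma actDual_mul (u w : (ι → ℤ) ≃ₗ[ℤ] (ι → ℤ)) (η : ι → ℤ) :
    actDual (u * w) η = actDual u (actDual w η) := by
  apply vec_ext_pair; intro a
  simp only [pairZ_actDual]
  rfl

lemma actDual_one (η : ι → ℤ) : actDual (1 : (ι → ℤ) ≃ₗ[ℤ] (ι → ℤ)) η = η := by
  apply vec_ext_pair; intro a
  simp only [pairZ_actDual]
  rfl

/-! ### Polynomial helpers -/

/-- the linear form attached to `γ ∈ Γ` -/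
def lin (γ : ι → ℤ) : MvPolynomial ι ℂ := ∑ i, C (γ i : ℂ) * X i

lemma eval_lin (γ : ι → ℤ) (z : ι → ℂ) : eval z (lin γ) = evalC γ z := by
  simp [lin, evalC]

/-- translation of polynomials -/
def shiftP (η : ι → ℤ) (p : MvPolynomial ι ℂ) : MvPolynomial ι ℂ :=
  aeval (fun i => X i - C (η i : ℂ)) p

lemma eval_aeval' (g : ι → MvPolynomial ι ℂ) (p : MvPolynomial ι ℂ) (z : ι → ℂ) :
    eval z (aeval g p) = eval (fun i => eval z (g i)) p := by
  induction p using MvPolynomial.induction_on with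
  | C a => simp
  | add p q hp hq => rw [map_add, map_add, map_add, hp, hq]
  | mul_X p i hp => rw [map_mul, map_mul, map_mul, hp, aeval_X, eval_X]

lemma eval_shiftP (η : ι → ℤ) (p : MvPolynomial ι ℂ) (z : ι → ℂ) :
    eval z (shiftP η p) = eval (z - toV η) p := by
  rw [shiftP, eval_aeval']
  congr 1
  congr 1
  ext i; simp [toV]

/-- the action on polynomials -/
def actP (w : (ι → ℤ) ≃ₗ[ℤ] (ι → ℤ)) (p : MvPolynomial ι ℂ) : MvPolynomial ι ℂ :=
  aeval (fun i => lin (w.symm (e i))) p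

lemma eval_actP (w : (ι → ℤ) ≃ₗ[ℤ] (ι → ℤ)) (p : MvPolynomial ι ℂ) (z : ι → ℂ) :
    eval z (actP w p) = eval (actV w z) p := by
  rw [actP, eval_aeval']
  congr 1
  congr 1
  ext i; simp [actV, eval_lin]

lemma lin_ne_zero {α : ι → ℤ} (hα : α ≠ 0) : lin α ≠ 0 := by
  intro h
  apply hα
  ext i
  have := eval_lin α (toV (e i))
  rw [h, evalC_toV, pairZ_e_right] at this
  simpa using this.symm

lemma totalDegree_lin_le (α : ι → ℤ) : (lin α).totalDegree ≤ 1 := by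
  apply totalDegree_finsetSum_le
  intro i _
  refine (totalDegree_mul _ _).trans ?_
  rw [totalDegree_C, totalDegree_X]

lemma totalDegree_lin {α : ι → ℤ} (hα : α ≠ 0) : (lin α).totalDegree = 1 := by
  refine le_antisymm (totalDegree_lin_le α) ?_
  by_contra hlt
  have h0 : (lin α).totalDegree = 0 := by omega
  rw [totalDegree_eq_zero_iff_eq_C] at h0
  apply lin_ne_zero hα
  rw [h0]
  have h1 := eval_lin α 0
  rw [h0] at h1
  simp [evalC] at h1
  rw [h1, C_0]

lemma irreducible_lin {α : ι → ℤ} (hα : α ≠ 0) : Irreducible (lin α) := by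
  apply irreducible_of_totalDegree_eq_one (totalDegree_lin hα)
  intro x hx
  by_contra hnu
  have hx0 : x = 0 := by
    by_contra h; exact hnu (isUnit_iff_ne_zero.mpr h)
  subst hx0
  apply lin_ne_zero hα
  ext m
  simpa using hx m

/-- A polynomial vanishing on the hyperplane `α = 0` is divisible by `α`. -/
lemma lin_dvd_of_vanish {α : ι → ℤ} (hα : α ≠ 0) (M : MvPolynomial ι ℂ)
    (h : ∀ z, evalC α z = 0 → eval z M = 0) : lin α ∣ M := by
  obtain ⟨j, hj⟩ : ∃ j, α j ≠ 0 := by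
    by_contra hcon; push Not at hcon; exact hα (funext hcon)
  have hjC : (α j : ℂ) ≠ 0 := by exact_mod_cast hj
  let g : ι → MvPolynomial ι ℂ := fun i => if i = j then X i - C ((α j : ℂ)⁻¹) * lin α else X i
  have h0 : aeval g M = 0 := by
    apply MvPolynomial.funext
    intro z
    rw [eval_aeval', map_zero]
    apply h
    have : (fun i => eval z (g i)) = z - Pi.single j ((α j : ℂ)⁻¹ * evalC α z) := by
      ext i
      by_cases hi : i = j
      · subst hi; simp [g, eval_lin]
      · simp [g, hi]
    rw [this, evalC_sub_right]
    have h2 : evalC α (Pi.single j ((α j : ℂ)⁻¹ * evalC α z)) = evalC α z := by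
      conv_lhs => rw [evalC]
      simp [Pi.single_apply, hjC]
    rw [h2, sub_self]
  rw [← Ideal.mem_span_singleton, ← Ideal.Quotient.eq_zero_iff_mem]
  have h3 : (Ideal.Quotient.mkₐ ℂ (Ideal.span {lin α})).comp (aeval g) =
      Ideal.Quotient.mkₐ ℂ (Ideal.span {lin α}) := by
    apply MvPolynomial.algHom_ext
    intro i
    simp only [AlgHom.comp_apply, aeval_X, Ideal.Quotient.mkₐ_eq_mk]
    rw [Ideal.Quotient.eq, Ideal.mem_span_singleton]
    by_cases hi : i = j
    · subst hi
      simp only [g, if_true, sub_sub_cancel_left]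
      exact (Dvd.intro_left _ rfl).neg_right
    · simp [g, hi]
  have h4 := DFunLike.congr_fun h3 M
  simp only [AlgHom.comp_apply, h0, map_zero, Ideal.Quotient.mkₐ_eq_mk] at h4
  exact h4.symm

/-! ### Degree bookkeeping -/

/-- `p` is zero or of degree `< n` -/
def DL (p : MvPolynomial ι ℂ) (n : ℕ) : Prop := p = 0 ∨ p.totalDegree < n

lemma DL.add {p q : MvPolynomial ι ℂ} {n : ℕ} (hp : DL p n) (hq : DL q n) : DL (p + q) n := by
  rcases hp with rfl | hp
  · simpa using hq
  rcases hq with rfl | hq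
  · right; simpa using hp
  · right; exact lt_of_le_of_lt (totalDegree_add _ _) (max_lt hp hq)

lemma DL.zero (n : ℕ) : DL (0 : MvPolynomial ι ℂ) n := Or.inl rfl

lemma DL.sum {κ : Type*} (s : Finset κ) (f : κ → MvPolynomial ι ℂ) {n : ℕ}
    (h : ∀ i ∈ s, DL (f i) n) : DL (∑ i ∈ s, f i) n :=
  Finset.sum_induction _ (fun p => DL p n) (fun _ _ => DL.add) (DL.zero n) h

lemma DL.mul_left {p q : MvPolynomial ι ℂ} {m n : ℕ} (hp : p.totalDegree ≤ m) (hq : DL q n) :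
    DL (p * q) (m + n) := by
  rcases hq with rfl | hq
  · left; simp
  · right; have := totalDegree_mul p q; omega

lemma DL.mono {p : MvPolynomial ι ℂ} {m n : ℕ} (hp : DL p m) (h : m ≤ n) : DL p n :=
  hp.imp id (fun h' => by omega)

lemma DL_succ {p : MvPolynomial ι ℂ} {n : ℕ} : DL p (n + 1) ↔ p.totalDegree ≤ n := by
  constructor
  · rintro (rfl | h)
    · simp
    · omega
  · intro h; right; omega

/-- `a` and `b` have degree at most `n` and the same leading part of degree `n` -/
def SameTop (a b : MvPolynomial ι ℂ) (n : ℕ) : Prop :=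
  a.totalDegree ≤ n ∧ b.totalDegree ≤ n ∧ DL (a - b) n

lemma SameTop.mul {a b a' b' : MvPolynomial ι ℂ} {m n : ℕ} (h : SameTop a b m)
    (h' : SameTop a' b' n) : SameTop (a * a') (b * b') (m + n) := by
  obtain ⟨h1, h2, h3⟩ := h
  obtain ⟨h1', h2', h3'⟩ := h'
  refine ⟨(totalDegree_mul _ _).trans (by omega), (totalDegree_mul _ _).trans (by omega), ?_⟩
  have : a * a' - b * b' = a * (a' - b') + b' * (a - b) := by ring
  rw [this]
  exact (DL.mul_left h1 h3').add ((DL.mul_left h2' h3).mono (by omega))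

lemma SameTop.prod {κ : Type*} (s : Finset κ) (f g : κ → MvPolynomial ι ℂ) (n : κ → ℕ)
    (h : ∀ i ∈ s, SameTop (f i) (g i) (n i)) :
    SameTop (∏ i ∈ s, f i) (∏ i ∈ s, g i) (∑ i ∈ s, n i) := by
  induction s using Finset.induction_on with
  | empty => simp [SameTop, DL]
  | insert a s ha ih =>
    rw [Finset.prod_insert ha, Finset.prod_insert ha, Finset.sum_insert ha]
    exact (h a (Finset.mem_insert_self _ _)).mul
      (ih fun i hi => h i (Finset.mem_insert_of_mem hi))

lemma SameTop.pow {a b : MvPolynomial ι ℂ} {m : ℕ} (h : SameTop a b m) (k : ℕ) :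
    SameTop (a ^ k) (b ^ k) (k * m) := by
  simpa using SameTop.prod (Finset.range k) (fun _ => a) (fun _ => b) (fun _ => m) (fun _ _ => h)

lemma SameTop.sub_C {p : MvPolynomial ι ℂ} (hp : p.totalDegree ≤ 1) (a b : ℂ) :
    SameTop (p - C a) (p - C b) 1 := by
  refine ⟨(totalDegree_sub_C_le _ _).trans hp, (totalDegree_sub_C_le _ _).trans hp, ?_⟩
  right
  have : p - C a - (p - C b) = C (b - a) := by rw [C_sub]; ring
  rw [this, totalDegree_C]; exact one_pos

lemma DL_sub_shiftP (η : ι → ℤ) (p : MvPolynomial ι ℂ) {d : ℕ} (hp : p.totalDegree ≤ d) :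
    DL (p - shiftP η p) d := by
  conv => enter [1]; rw [p.as_sum, shiftP, map_sum, ← Finset.sum_sub_distrib]
  apply DL.sum
  intro s hs
  have hs' : (∑ i, s i) ≤ d := by
    refine le_trans ?_ hp
    have := le_totalDegree hs
    rwa [Finsupp.sum_fintype] at this
    intro; rfl
  rw [aeval_monomial, monomial_eq, algebraMap_eq, ← mul_sub]
  rw [Finsupp.prod_fintype _ _ (by simp), Finsupp.prod_fintype _ _ (by simp)]
  have h1 : SameTop (∏ i, (X i : MvPolynomial ι ℂ) ^ s i)
      (∏ i, (X i - C (η i : ℂ) : MvPolynomial ι ℂ) ^ s i) (∑ i, s i) := by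
    have := SameTop.prod (Finset.univ) (fun i => (X i : MvPolynomial ι ℂ) ^ s i)
      (fun i => (X i - C (η i : ℂ) : MvPolynomial ι ℂ) ^ s i) (fun i => s i * 1) (by
        intro i _
        apply SameTop.pow
        have := SameTop.sub_C (p := (X i : MvPolynomial ι ℂ)) (by simp) 0 (η i : ℂ)
        simpa using this)
    simpa using this
  have h2 := DL.mul_left (p := C (coeff s p)) (m := 0) (by simp) h1.2.2
  exact h2.mono (by omega)

lemma totalDegree_prod_lin (s : Finset (ι → ℤ)) (h : ∀ α ∈ s, α ≠ 0) :
    (∏ α ∈ s, lin α) ≠ 0 ∧ (∏ α ∈ s, lin α).totalDegree = s.card := by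
  have h0 : ∀ s : Finset (ι → ℤ), (∀ α ∈ s, α ≠ 0) → (∏ α ∈ s, lin α) ≠ 0 := fun s hs =>
    Finset.prod_ne_zero_iff.mpr fun α hα => lin_ne_zero (hs α hα)
  refine ⟨h0 s h, ?_⟩
  induction s using Finset.induction_on with
  | empty => simp
  | insert a s ha ih =>
    have hs : ∀ α ∈ s, α ≠ 0 := fun α hα => h α (Finset.mem_insert_of_mem hα)
    have haa := h a (Finset.mem_insert_self _ _)
    rw [Finset.prod_insert ha, totalDegree_mul_of_isDomain (lin_ne_zero haa) (h0 s hs), ih hs,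
      totalDegree_lin haa, Finset.card_insert_of_notMem ha]
    omega

lemma affine_of_totalDegree_le_one (p : MvPolynomial ι ℂ) (hp : p.totalDegree ≤ 1) :
    ∃ (c0 : ℂ) (c : ι → ℂ), p = C c0 + ∑ i, C (c i) * X i := by
  have hmem : ∀ s : ι →₀ ℕ, (∑ i, s i) ≤ 1 →
      ∀ a : ℂ, ∃ (c0 : ℂ) (c : ι → ℂ), monomial s a = C c0 + ∑ i, C (c i) * X i := by
    intro s hs a
    by_cases h0 : ∃ i, s i ≠ 0
    · obtain ⟨i, hi⟩ := h0
      have hsi : s = Finsupp.single i 1 := by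
        ext j
        have h1 := Finset.add_sum_erase Finset.univ (fun i => s i) (Finset.mem_univ i)
        by_cases hji : j = i
        · subst hji; simp; omega
        · have h2 := Finset.single_le_sum (f := fun i => s i) (fun _ _ => Nat.zero_le _)
            (Finset.mem_erase.mpr ⟨hji, Finset.mem_univ j⟩)
          rw [Finsupp.single_apply, if_neg (Ne.symm hji)]
          omega
      refine ⟨0, Pi.single i a, ?_⟩
      rw [Finset.sum_eq_single i]
      · simp [hsi, C_mul_X_eq_monomial]
      · intro b _ hb; simp [hb]
      · simp
    · push Not at h0
      refine ⟨a, 0, ?_⟩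
      have : s = 0 := by ext j; simpa using h0 j
      simp [this]
  have hsum : ∀ t : Finset (ι →₀ ℕ), (∀ s ∈ t, (∑ i, s i) ≤ 1) →
      ∃ (c0 : ℂ) (c : ι → ℂ), ∑ s ∈ t, monomial s (coeff s p) = C c0 + ∑ i, C (c i) * X i := by
    intro t
    induction t using Finset.induction_on with
    | empty => intro _; exact ⟨0, 0, by simp⟩
    | insert s t hs ih =>
      intro h
      obtain ⟨c0, c, hc⟩ := ih fun s hs => h s (Finset.mem_insert_of_mem hs)
      obtain ⟨d0, d, hd⟩ := hmem s (h s (Finset.mem_insert_self _ _)) (coeff s p)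
      refine ⟨d0 + c0, d + c, ?_⟩
      rw [Finset.sum_insert hs, hc, hd]
      simp only [C_add, Pi.add_apply, add_mul, Finset.sum_add_distrib]
      ring
  rw [p.as_sum]
  apply hsum
  intro s hs
  refine le_trans ?_ hp
  have := le_totalDegree hs
  rwa [Finsupp.sum_fintype] at this
  intro; rfl


namespace Data

variable (D : Data ι)

/-! ### The full root system `R = W Δ` -/

/-- the full set of roots -/
def R : Finset (ι → ℤ) := (D.W_finite.toFinset ×ˢ D.Δ).image (fun x => x.1 x.2)

lemma mem_R {α : ι → ℤ} : α ∈ D.R ↔ ∃ w ∈ D.W, ∃ β ∈ D.Δ, α = w β := by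
  simp only [R, Finset.mem_image, Finset.mem_product, Set.Finite.mem_toFinset, SetLike.mem_coe,
    Prod.exists]
  constructor
  · rintro ⟨w, β, ⟨hw, hβ⟩, rfl⟩; exact ⟨w, hw, β, hβ, rfl⟩
  · rintro ⟨w, hw, β, hβ, rfl⟩; exact ⟨w, β, ⟨hw, hβ⟩, rfl⟩

lemma symm_mem {w : (ι → ℤ) ≃ₗ[ℤ] (ι → ℤ)} (hw : w ∈ D.W) : w.symm ∈ D.W := D.W.inv_mem hw

lemma Δ_sub_R {α : ι → ℤ} (h : α ∈ D.Δ) : α ∈ D.R :=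
  D.mem_R.mpr ⟨1, D.W.one_mem, α, h, rfl⟩

lemma R_W {w : (ι → ℤ) ≃ₗ[ℤ] (ι → ℤ)} (hw : w ∈ D.W) {α : ι → ℤ} (h : α ∈ D.R) : w α ∈ D.R := by
  obtain ⟨u, hu, β, hβ, rfl⟩ := D.mem_R.mp h
  exact D.mem_R.mpr ⟨w * u, D.W.mul_mem hw hu, β, hβ, rfl⟩

lemma R_neg {α : ι → ℤ} (h : α ∈ D.R) : -α ∈ D.R := by
  obtain ⟨u, hu, β, hβ, rfl⟩ := D.mem_R.mp h
  exact D.mem_R.mpr ⟨u, hu, -β, D.Δ_neg β hβ, by simp⟩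

lemma R_ne_zero {α : ι → ℤ} (h : α ∈ D.R) : α ≠ 0 := by
  obtain ⟨u, hu, β, hβ, rfl⟩ := D.mem_R.mp h
  intro h0
  have hβ0 : β = 0 := by simpa using h0
  have := D.coroot_pair β hβ
  rw [hβ0] at this
  simp [pairZ] at this

lemma R_prim {α : ι → ℤ} (h : α ∈ D.R) (n : ℤ) (β : ι → ℤ) (hn : α = n • β) : IsUnit n := by
  obtain ⟨u, hu, γ, hγ, rfl⟩ := D.mem_R.mp h
  apply D.Δ_prim γ hγ n (u.symm β)
  rw [← map_smul, ← hn]; simp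

lemma R_refl {α : ι → ℤ} (h : α ∈ D.R) :
    ∃ s ∈ D.W, ∃ φ : (ι → ℤ) → ℤ, (∀ x, s x = x - φ x • α) ∧ φ α = 2 := by
  obtain ⟨u, hu, β, hβ, rfl⟩ := D.mem_R.mp h
  obtain ⟨s, hs, hs'⟩ := D.refl_mem β hβ
  refine ⟨u * s * u⁻¹, D.W.mul_mem (D.W.mul_mem hu hs) (D.W.inv_mem hu),
    fun x => pairZ (u.symm x) (D.coroot β), ?_, ?_⟩
  · intro x
    have : (u * s * u⁻¹) x = u (s (u.symm x)) := rfl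
    rw [this, hs', reflMap, map_sub, map_smul]
    simp
  · simp [D.coroot_pair β hβ]

lemma Φ_W {w : (ι → ℤ) ≃ₗ[ℤ] (ι → ℤ)} (hw : w ∈ D.W) {ω : ι → ℤ} (h : ω ∈ D.Φ) : w ω ∈ D.Φ := by
  obtain ⟨u, hu, i, rfl⟩ := (D.Φ_spec _).mp h
  exact (D.Φ_spec _).mpr ⟨w * u, D.W.mul_mem hw hu, i, rfl⟩

lemma e_mem_Φ (i : ι) : e i ∈ D.Φ := (D.Φ_spec _).mpr ⟨1, D.W.one_mem, i, rfl⟩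

lemma Λ₁_W {w : (ι → ℤ) ≃ₗ[ℤ] (ι → ℤ)} (hw : w ∈ D.W) {η : ι → ℤ} (h : η ∈ D.Λ₁) :
    actDual w η ∈ D.Λ₁ := by
  obtain ⟨u, hu, i, hi, rfl⟩ := (D.Λ₁_spec _).mp h
  exact (D.Λ₁_spec _).mpr ⟨w * u, D.W.mul_mem hw hu, i, hi, (actDual_mul _ _ _).symm⟩

lemma e_mem_Λ₁ {i : ι} (hi : D.ell i = 1) : e i ∈ D.Λ₁ :=
  (D.Λ₁_spec _).mpr ⟨1, D.W.one_mem, i, hi, (actDual_one _).symm⟩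

lemma ell_Λ₁ {η : ι → ℤ} (h : η ∈ D.Λ₁) : pairZ D.ell η = 1 := by
  obtain ⟨u, hu, i, hi, rfl⟩ := (D.Λ₁_spec _).mp h
  rw [pairZ_actDual, D.C4 _ (D.symm_mem hu), pairZ_e_right, hi]

lemma Φ_Λ₁ {η ω : ι → ℤ} (h : η ∈ D.Λ₁) (hω : ω ∈ D.Φ) :
    pairZ ω η = -1 ∨ pairZ ω η = 0 ∨ pairZ ω η = 1 := by
  obtain ⟨u, hu, i, hi, rfl⟩ := (D.Λ₁_spec _).mp h
  rw [pairZ_actDual, pairZ_e_right]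
  exact D.C7 i hi _ (Or.inr (D.Φ_W (D.symm_mem hu) hω))

lemma card_filter_actDual {w : (ι → ℤ) ≃ₗ[ℤ] (ι → ℤ)} (S : Finset (ι → ℤ))
    (hw : ∀ x ∈ S, w x ∈ S) (hw' : ∀ x ∈ S, w.symm x ∈ S) (η : ι → ℤ) :
    (S.filter fun x => 0 < pairZ x (actDual w η)).card = (S.filter fun x => 0 < pairZ x η).card := by
  apply Finset.card_nbij' (fun x => w.symm x) (fun x => w x)
  · intro x hx
    simp only [Finset.coe_filter, Set.mem_ofPred_eq, pairZ_actDual] at hx ⊢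
    exact ⟨hw' _ hx.1, hx.2⟩
  · intro x hx
    simp only [Finset.coe_filter, Set.mem_ofPred_eq, pairZ_actDual] at hx ⊢
    exact ⟨hw _ hx.1, by simpa using hx.2⟩
  · intro x _; simp
  · intro x _; simp

lemma card_Φ_le {η : ι → ℤ} (h : η ∈ D.Λ₁) :
    (D.Φ.filter fun x => 0 < pairZ x η).card ≤ 1 + (D.R.filter fun x => 0 < pairZ x η).card := by
  obtain ⟨u, hu, i, hi, rfl⟩ := (D.Λ₁_spec _).mp h
  rw [card_filter_actDual D.Φ (fun x hx => D.Φ_W hu hx) (fun x hx => D.Φ_W (D.symm_mem hu) hx),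
    card_filter_actDual D.R (fun x hx => D.R_W hu hx) (fun x hx => D.R_W (D.symm_mem hu) hx)]
  simp only [pairZ_e_right]
  have key : ∀ S : Finset (ι → ℤ), (∀ x ∈ S, (∀ i, 0 ≤ x i) ∨ (∀ i, x i ≤ 0)) →
      (∀ x ∈ S, x i = -1 ∨ x i = 0 ∨ x i = 1) →
      (∑ x ∈ S.filter (fun x => ∀ i, 0 ≤ x i), x) i = ((S.filter fun x => 0 < x i).card : ℤ) := by
    intro S h1 h2
    rw [Finset.sum_apply, Finset.card_filter, Finset.sum_filter, Nat.cast_sum]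
    apply Finset.sum_congr rfl
    intro x hx
    have h3 := h2 x hx
    by_cases hp : 0 < x i
    · have : ∀ i, 0 ≤ x i := by
        rcases h1 x hx with h | h
        · exact h
        · have := h i; omega
      rw [if_pos this, if_pos hp]; push_cast; omega
    · rw [if_neg hp]
      split_ifs with h4
      · have := h4 i; push_cast; omega
      · rfl
  have h5 := congrFun D.C5 i
  rw [Pi.sub_apply, key D.Φ D.C3 (fun x hx => D.C7 i hi x (Or.inr hx)),
    key D.Δ D.C2 (fun x hx => D.C7 i hi x (Or.inl hx)), hi] at h5
  have h6 : (D.Δ.filter fun x => 0 < x i).card ≤ (D.R.filter fun x => 0 < x i).card := by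
    apply Finset.card_le_card
    intro x hx
    simp only [Finset.mem_filter] at hx ⊢
    exact ⟨D.Δ_sub_R hx.1, hx.2⟩
  omega

lemma R_prop {α β : ι → ℤ} (hα : α ∈ D.R) (hβ : β ∈ D.R)
    (h : ∀ i j, α j * β i = α i * β j) : α = β ∨ α = -β := by
  obtain ⟨j, hj⟩ : ∃ j, α j ≠ 0 := by
    by_contra hcon; push Not at hcon; exact D.R_ne_zero hα (funext hcon)
  have hg : 0 < Int.gcd (α j) (β j) := Int.gcd_pos_of_ne_zero_left _ hj
  obtain ⟨a, b, hab, ha, hb⟩ := Int.exists_gcd_one hg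
  have hgz : ((Int.gcd (α j) (β j) : ℕ) : ℤ) ≠ 0 := by exact_mod_cast hg.ne'
  set g : ℤ := ((Int.gcd (α j) (β j) : ℕ) : ℤ) with hgdef
  have h1 : ∀ i, a * β i = b * α i := by
    intro i
    apply mul_right_cancel₀ hgz
    have := h i j
    rw [ha, hb] at this
    linarith
  have hcop : IsCoprime a b := Int.isCoprime_iff_gcd_eq_one.mpr hab
  have hda : ∀ i, a ∣ α i := fun i => hcop.dvd_of_dvd_mul_left ⟨β i, (h1 i).symm⟩
  have hdb : ∀ i, b ∣ β i := fun i => hcop.symm.dvd_of_dvd_mul_left ⟨α i, h1 i⟩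
  choose x hx using hda
  choose y hy using hdb
  have hua : IsUnit a := D.R_prim hα a x (by ext i; simpa using hx i)
  have hub : IsUnit b := D.R_prim hβ b y (by ext i; simpa using hy i)
  rcases Int.isUnit_iff.mp hua with rfl | rfl <;> rcases Int.isUnit_iff.mp hub with rfl | rfl
  · left; ext i; have := h1 i; omega
  · right; ext i; have := h1 i; simp only [Pi.neg_apply]; omega
  · right; ext i; have := h1 i; simp only [Pi.neg_apply]; omega
  · left; ext i; have := h1 i; omega

lemma relPrime_lin {α β : ι → ℤ} (hα : α ∈ D.R) (hβ : β ∈ D.R) (h1 : α ≠ β) (h2 : α ≠ -β) :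
    IsRelPrime (lin α) (lin β) := by
  rw [(irreducible_lin (D.R_ne_zero hα)).isRelPrime_iff_not_dvd]
  rintro ⟨c, hc⟩
  have := D.R_prop hα hβ (by
    intro i j
    have h3 : ∀ z, evalC α z = 0 → evalC β z = 0 := by
      intro z hz
      rw [← eval_lin, hc, map_mul, eval_lin, hz, zero_mul]
    have hp : ∀ γ : ι → ℤ, evalC γ (toV (α j • e i - α i • e j)) =
        ((α j * γ i - α i * γ j : ℤ) : ℂ) := by
      intro γ
      rw [evalC_toV, pairZ_sub_right]
      congr 1
      simp [pairZ, e, Pi.single_apply, mul_comm]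
    have h4 := h3 (toV (α j • e i - α i • e j)) (by rw [hp]; push_cast; ring)
    rw [hp] at h4
    have h5 : α j * β i - α i * β j = 0 := by exact_mod_cast h4
    omega)
  tauto

/-! ### The numerators of the difference operator -/

/-- numerator -/
def numP (k : (ι → ℤ) → ℂ) (η : ι → ℤ) : MvPolynomial ι ℂ :=
  ∏ ω ∈ D.Φ.filter (fun ω => 0 < pairZ ω η), (lin ω - C (k ω))

/-- complementary product of roots -/
def cofP (η : ι → ℤ) : MvPolynomial ι ℂ :=
  ∏ α ∈ D.R.filter (fun α => ¬ 0 < pairZ α η), lin α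

/-- normalizing constant -/
def cst (η : ι → ℤ) : ℂ := ∏ α ∈ D.R.filter (fun α => 0 < pairZ α η), (pairZ α η : ℂ)

/-- `f_η` multiplied by the product of all roots -/
def G (k : (ι → ℤ) → ℂ) (η : ι → ℤ) : MvPolynomial ι ℂ :=
  D.numP k η * (D.cofP η * C (D.cst η))

/-- the product of all roots times `L(p)` -/
def Npoly (k : (ι → ℤ) → ℂ) (p : MvPolynomial ι ℂ) : MvPolynomial ι ℂ :=
  ∑ η ∈ D.Λ₁, D.G k η * shiftP η p

/-- the product of all roots -/
def PiR : MvPolynomial ι ℂ := ∏ α ∈ D.R, lin α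

/-- `k` is `W`-invariant on `Φ` -/
def KInv (k : (ι → ℤ) → ℂ) : Prop := ∀ w ∈ D.W, ∀ ω ∈ D.Φ, k (w ω) = k ω

lemma prod_reindex {w : (ι → ℤ) ≃ₗ[ℤ] (ι → ℤ)} (S : Finset (ι → ℤ))
    (hw : ∀ x ∈ S, w x ∈ S) (hw' : ∀ x ∈ S, w.symm x ∈ S) (P : (ι → ℤ) → Prop)
    [DecidablePred P] [DecidablePred fun x => P (w.symm x)]
    (g h : (ι → ℤ) → ℂ) (hgh : ∀ x ∈ S, g x = h (w.symm x)) :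
    ∏ x ∈ S.filter (fun x => P (w.symm x)), g x = ∏ x ∈ S.filter P, h x := by
  apply Finset.prod_nbij' (fun x => w.symm x) (fun x => w x)
  · intro x hx
    simp only [Finset.mem_filter] at hx ⊢
    exact ⟨hw' _ hx.1, hx.2⟩
  · intro x hx
    simp only [Finset.mem_filter] at hx ⊢
    exact ⟨hw _ hx.1, by simpa using hx.2⟩
  · intro x _; simp
  · intro x _; simp
  · intro x hx
    exact hgh x (Finset.mem_filter.mp hx).1

lemma eval_G_act {k : (ι → ℤ) → ℂ} (hk : D.KInv k) {w : (ι → ℤ) ≃ₗ[ℤ] (ι → ℤ)} (hw : w ∈ D.W)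
    (η : ι → ℤ) (z : ι → ℂ) :
    eval (actV w z) (D.G k (actDual w η)) = eval z (D.G k η) := by
  have hΦ : ∀ x ∈ D.Φ, w x ∈ D.Φ := fun x hx => D.Φ_W hw hx
  have hΦ' : ∀ x ∈ D.Φ, w.symm x ∈ D.Φ := fun x hx => D.Φ_W (D.symm_mem hw) hx
  have hR : ∀ x ∈ D.R, w x ∈ D.R := fun x hx => D.R_W hw hx
  have hR' : ∀ x ∈ D.R, w.symm x ∈ D.R := fun x hx => D.R_W (D.symm_mem hw) hx
  simp only [G, numP, cofP, cst, map_mul, eval_prod, map_sub, eval_lin, eval_C, pairZ_actDual,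
    evalC_actV]
  congr 1
  · exact prod_reindex D.Φ hΦ hΦ' (fun x => 0 < pairZ x η) _ (fun x => evalC x z - k x) (by
      intro x hx
      rw [hk _ (D.symm_mem hw) x hx])
  congr 1
  · exact prod_reindex D.R hR hR' (fun x => ¬ 0 < pairZ x η) _ (fun x => evalC x z)
      (fun _ _ => rfl)
  · exact prod_reindex D.R hR hR' (fun x => 0 < pairZ x η) _ (fun x => (pairZ x η : ℂ))
      (fun _ _ => rfl)

lemma eval_PiR_act {w : (ι → ℤ) ≃ₗ[ℤ] (ι → ℤ)} (hw : w ∈ D.W) (z : ι → ℂ) :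
    eval (actV w z) D.PiR = eval z D.PiR := by
  have hR : ∀ x ∈ D.R, w x ∈ D.R := fun x hx => D.R_W hw hx
  have hR' : ∀ x ∈ D.R, w.symm x ∈ D.R := fun x hx => D.R_W (D.symm_mem hw) hx
  simp only [PiR, eval_prod, eval_lin, evalC_actV]
  have := prod_reindex D.R hR hR' (fun _ => True) (fun x => evalC (w.symm x) z)
    (fun x => evalC x z) (fun _ _ => rfl)
  simpa using this

lemma eval_Npoly (k : (ι → ℤ) → ℂ) (p : MvPolynomial ι ℂ) (z : ι → ℂ) :
    eval z (D.Npoly k p) = ∑ η ∈ D.Λ₁, eval z (D.G k η) * eval (z - toV η) p := by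
  simp [Npoly, eval_sum, eval_shiftP]

lemma Npoly_inv {k : (ι → ℤ) → ℂ} (hk : D.KInv k) {p : MvPolynomial ι ℂ} (hp : D.WInv p) :
    D.WInv (D.Npoly k p) := by
  intro w hw z
  rw [eval_Npoly, eval_Npoly]
  symm
  apply Finset.sum_nbij' (fun η => actDual w η) (fun η => actDual w⁻¹ η)
  · intro η hη; exact D.Λ₁_W hw hη
  · intro η hη; exact D.Λ₁_W (D.W.inv_mem hw) hη
  · intro η _; rw [← actDual_mul, inv_mul_cancel, actDual_one]
  · intro η _; rw [← actDual_mul, mul_inv_cancel, actDual_one]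
  · intro η _
    rw [D.eval_G_act hk hw, toV_actDual, ← actV_sub, hp w hw]

lemma lin_dvd_Npoly (k : (ι → ℤ) → ℂ) (p : MvPolynomial ι ℂ) {α : ι → ℤ} (hα : α ∈ D.R) :
    lin α ∣ D.Npoly k p := by
  apply Finset.dvd_sum
  intro η _
  apply Dvd.dvd.mul_right
  apply Dvd.dvd.mul_left
  apply Dvd.dvd.mul_right
  by_cases h : 0 < pairZ α η
  · have h1 : lin (-α) ∣ D.cofP η := by
      apply Finset.dvd_prod_of_mem
      rw [Finset.mem_filter]
      exact ⟨D.R_neg hα, by rw [pairZ_neg_left]; omega⟩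
    have h2 : lin (-α) = - lin α := by simp [lin]
    rw [h2] at h1
    exact (neg_dvd).mp h1
  · apply Finset.dvd_prod_of_mem
    rw [Finset.mem_filter]
    exact ⟨hα, h⟩

lemma lin_neg (α : ι → ℤ) : lin (-α) = - lin α := by simp [lin]

lemma lin_sq_dvd_of_inv {N : MvPolynomial ι ℂ} (hN : D.WInv N) {α : ι → ℤ} (hα : α ∈ D.R)
    (h : lin α ∣ N) : lin α * lin (-α) ∣ N := by
  obtain ⟨M, hM⟩ := h
  obtain ⟨s, hs, φ, hsφ, hφ⟩ := D.R_refl hα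
  have hsα : s α = -α := by rw [hsφ, hφ]; ext i; simp; ring
  have hsα' : s.symm α = -α := by
    rw [LinearEquiv.symm_apply_eq, map_neg, hsα, neg_neg]
  have hanti : lin α * (actP s M + M) = 0 := by
    apply MvPolynomial.funext
    intro z
    have h1 := hN s hs z
    rw [hM, map_mul, map_mul, eval_lin, eval_lin, evalC_actV, hsα', evalC_neg_left] at h1
    rw [map_mul, map_add, eval_lin, eval_actP, map_zero]
    linear_combination -h1
  have hanti' : actP s M + M = 0 :=
    (mul_eq_zero.mp hanti).resolve_left (lin_ne_zero (D.R_ne_zero hα))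
  have hdvd : lin α ∣ M := by
    apply lin_dvd_of_vanish (D.R_ne_zero hα)
    intro z hz
    have hfix : actV s z = z := by
      apply vec_ext_eval
      intro a
      rw [evalC_actV]
      have h2 : s.symm a = a - φ (s.symm a) • (-α) := by
        have := hsφ (s.symm a)
        rw [LinearEquiv.apply_symm_apply] at this
        have h3 : s.symm a = a + φ (s.symm a) • α := by
          rw [eq_sub_iff_add_eq] at this; exact this.symm
        rw [smul_neg, sub_neg_eq_add]; exact h3
      rw [h2, evalC_sub_left, evalC_smul_left, evalC_neg_left, hz]; simp
    have h4 := congrArg (eval z) hanti'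
    rw [map_add, eval_actP, hfix, map_zero] at h4
    exact self_eq_neg.mp (eq_neg_of_add_eq_zero_left h4)
  rw [hM]
  apply mul_dvd_mul_left
  rw [lin_neg]
  exact (neg_dvd).mpr hdvd

lemma PiR_dvd (hreg : ∀ α ∈ D.R, ∑ i, α i ≠ 0) {N : MvPolynomial ι ℂ} (hN : D.WInv N)
    (h : ∀ α ∈ D.R, lin α ∣ N) : D.PiR ∣ N := by
  have hsplit : D.PiR = ∏ α ∈ D.R.filter (fun α => 0 < ∑ i, α i), (lin α * lin (-α)) := by
    rw [PiR, ← Finset.prod_filter_mul_prod_filter_not D.R (fun α => 0 < ∑ i, α i),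
      Finset.prod_mul_distrib]
    congr 1
    apply Finset.prod_nbij' (fun x => -x) (fun x => -x)
    · intro x hx
      simp only [Finset.mem_filter] at hx ⊢
      refine ⟨D.R_neg hx.1, ?_⟩
      have := hreg x hx.1
      simp only [Pi.neg_apply, Finset.sum_neg_distrib]
      omega
    · intro x hx
      simp only [Finset.mem_filter] at hx ⊢
      refine ⟨D.R_neg hx.1, ?_⟩
      simp only [Pi.neg_apply, Finset.sum_neg_distrib]
      omega
    · intro x _; simp
    · intro x _; simp
    · intro x _; simp
  rw [hsplit]
  apply Finset.prod_dvd_of_isRelPrime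
  · intro α hα β hβ hne
    simp only [Finset.coe_filter, Set.mem_ofPred_eq] at hα hβ
    have hne' : α ≠ -β := by
      rintro rfl
      have h1 := hα.2
      have h2 := hβ.2
      simp only [Pi.neg_apply, Finset.sum_neg_distrib] at h1
      omega
    have h1 := D.relPrime_lin hα.1 hβ.1 hne hne'
    have h2 := D.relPrime_lin hα.1 (D.R_neg hβ.1) hne' (by simpa using hne)
    have h3 := D.relPrime_lin (D.R_neg hα.1) hβ.1 (fun h => hne' (by rw [← h, neg_neg]))
      (fun h => hne (neg_injective h))
    have h4 := D.relPrime_lin (D.R_neg hα.1) (D.R_neg hβ.1) (fun h => hne (neg_injective h))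
      (fun h => hne' (neg_injective h))
    exact (h1.mul_right h2).mul_left (h3.mul_right h4)
  · intro α hα
    exact D.lin_sq_dvd_of_inv hN (Finset.mem_filter.mp hα).1 (h α (Finset.mem_filter.mp hα).1)

end Data


namespace Data

variable (D : Data ι)

lemma hreg_of {ρ : ι → ℂ} (hρ : D.InV0 ρ) (pl : (ι → ℤ) → MvPolynomial ι ℂ)
    (hpl : ∀ lam : ι → ℤ, lam ∈ LamPlus → D.CapelliAt ρ lam (pl lam)) :
    ∀ α ∈ D.R, ∑ i, α i ≠ 0 := by
  intro α hα h0
  obtain ⟨s, hs, φ, hsφ, hφ⟩ := D.R_refl hα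
  have hsα : s α = -α := by rw [hsφ, hφ]; ext i; simp; ring
  have hss : ∀ x, s (s x) = x := by
    intro x
    rw [hsφ x, map_sub, map_smul, hsα, hsφ x]
    simp
  have hsymm : ∀ x, s.symm x = s x := by
    intro x
    rw [LinearEquiv.symm_apply_eq, hss]
  have hσ : ∀ j, ∃ j', s (e j) = e j' := by
    intro j
    have hmem := D.Φ_W hs (D.e_mem_Φ j)
    have hsum : ∑ i, s (e j) i = 1 := by
      rw [hsφ]
      simp only [Pi.sub_apply, Pi.smul_apply, smul_eq_mul, Finset.sum_sub_distrib,
        ← Finset.mul_sum, h0]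
      simp [e]
    have hnn : ∀ i, 0 ≤ s (e j) i := by
      rcases D.C3 _ hmem with h | h
      · exact h
      · have := Finset.sum_nonpos (fun i (_ : i ∈ Finset.univ) => h i)
        omega
    obtain ⟨j', hj'⟩ : ∃ j', 0 < s (e j) j' := by
      by_contra hcon
      push Not at hcon
      have := Finset.sum_nonpos (fun i (_ : i ∈ Finset.univ) => hcon i)
      omega
    refine ⟨j', ?_⟩
    have h2 := Finset.add_sum_erase Finset.univ (s (e j)) (Finset.mem_univ j')
    have h3 : 0 ≤ ∑ i ∈ Finset.univ.erase j', s (e j) i := Finset.sum_nonneg (fun i _ => hnn i)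
    have h4 : ∑ i ∈ Finset.univ.erase j', s (e j) i = 0 := by omega
    have h5 := (Finset.sum_eq_zero_iff_of_nonneg (fun i _ => hnn i)).mp h4
    ext i
    by_cases hi : i = j'
    · subst hi
      have h6 : e i i = 1 := by simp [e]
      omega
    · rw [h5 i (by simp [hi])]; simp [e, hi]
  choose σ hσ using hσ
  obtain ⟨j, hj⟩ : ∃ j, σ j ≠ j := by
    by_contra hcon
    push Not at hcon
    apply D.R_ne_zero hα
    have h1 : s α = α := by
      conv_lhs => rw [vec_eq_sum α]
      rw [map_sum]
      conv_rhs => rw [vec_eq_sum α]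
      apply Finset.sum_congr rfl
      intro i _
      rw [map_smul, hσ, hcon]
    rw [hsα] at h1
    exact neg_eq_self.mp h1
  have hρs : actV s ρ = ρ := by
    funext i
    rw [actV, hsymm, hσ, evalC_e]
    exact hρ _ _ ⟨s, hs, Or.inl (hσ i).symm⟩
  have hν : actDual s (e j) ∈ LamPlus := by
    intro i
    rw [actDual, hsymm, hσ, pairZ_e_left]
    unfold e
    rw [Pi.single_apply]; split_ifs <;> norm_num
  have hνj : actDual s (e j) j = 0 := by
    rw [actDual, hsymm, hσ, pairZ_e_left, e, Pi.single_apply, if_neg hj]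
  have hej : e j ∈ (LamPlus : Set (ι → ℤ)) := by
    intro i
    unfold e
    rw [Pi.single_apply]; split_ifs <;> norm_num
  have hne : actDual s (e j) ≠ e j := by
    intro h
    rw [h] at hνj
    simp [e] at hνj
  obtain ⟨h1, h2, h3⟩ := hpl (e j) hej
  have h4 := h3 (e j) hej le_rfl
  have h5 := h3 _ hν (by rw [pairZ_actDual, D.C4 _ (D.symm_mem hs)])
  have h6 := h1 s hs (ρ + toV (e j))
  rw [actV_add, hρs, ← toV_actDual, h5, h4, if_neg hne, if_pos rfl] at h6
  exact zero_ne_one h6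

lemma PiR_ne_zero : D.PiR ≠ 0 := (totalDegree_prod_lin D.R (fun _ h => D.R_ne_zero h)).1

lemma PiR_deg : D.PiR.totalDegree = D.R.card :=
  (totalDegree_prod_lin D.R (fun _ h => D.R_ne_zero h)).2

lemma exists_L (hreg : ∀ α ∈ D.R, ∑ i, α i ≠ 0) {k : (ι → ℤ) → ℂ} (hk : D.KInv k)
    {p : MvPolynomial ι ℂ} (hp : D.WInv p) :
    ∃ q, D.WInv q ∧ D.PiR * q = D.Npoly k p := by
  have hN := D.Npoly_inv hk hp
  obtain ⟨q, hq⟩ := D.PiR_dvd hreg hN (fun α hα => D.lin_dvd_Npoly k p hα)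
  refine ⟨q, ?_, hq.symm⟩
  intro w hw z
  have h0 : D.PiR * (actP w q - q) = 0 := by
    apply MvPolynomial.funext
    intro z
    have h1 := hN w hw z
    rw [hq, map_mul, map_mul, D.eval_PiR_act hw] at h1
    rw [map_mul, map_sub, eval_actP, map_zero]
    linear_combination h1
  have h1 := (mul_eq_zero.mp h0).resolve_left D.PiR_ne_zero
  have h2 := congrArg (eval z) h1
  rw [map_sub, eval_actP, map_zero, sub_eq_zero] at h2
  exact h2

lemma DL_of_PiR {q : MvPolynomial ι ℂ} {n : ℕ} (h : DL (D.PiR * q) (D.R.card + n)) : DL q n := by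
  by_cases hq : q = 0
  · exact Or.inl hq
  · rcases h with h | h
    · exact Or.inl ((mul_eq_zero.mp h).resolve_left D.PiR_ne_zero)
    · rw [totalDegree_mul_of_isDomain D.PiR_ne_zero hq, D.PiR_deg] at h
      right; omega

lemma numP_deg (k : (ι → ℤ) → ℂ) (η : ι → ℤ) :
    (D.numP k η).totalDegree ≤ (D.Φ.filter (fun ω => 0 < pairZ ω η)).card := by
  refine (totalDegree_finsetProd _ _).trans ?_
  rw [Finset.card_eq_sum_ones]
  apply Finset.sum_le_sum
  intro ω _
  refine (totalDegree_sub _ _).trans ?_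
  rw [totalDegree_C]
  simpa using totalDegree_lin_le ω

lemma cof_deg (η : ι → ℤ) :
    (D.cofP η * C (D.cst η)).totalDegree ≤ (D.R.filter (fun α => ¬ 0 < pairZ α η)).card := by
  refine (totalDegree_mul _ _).trans ?_
  rw [totalDegree_C, add_zero]
  refine (totalDegree_finsetProd _ _).trans ?_
  rw [Finset.card_eq_sum_ones]
  apply Finset.sum_le_sum
  intro ω _
  exact totalDegree_lin_le ω

lemma G_cards {η : ι → ℤ} (hη : η ∈ D.Λ₁) :
    (D.Φ.filter (fun ω => 0 < pairZ ω η)).card + (D.R.filter (fun α => ¬ 0 < pairZ α η)).card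
      ≤ D.R.card + 1 := by
  have h1 := D.card_Φ_le hη
  have h2 := Finset.card_filter_add_card_filter_not (s := D.R) (fun α => 0 < pairZ α η)
  omega

lemma G_deg (k : (ι → ℤ) → ℂ) {η : ι → ℤ} (hη : η ∈ D.Λ₁) :
    (D.G k η).totalDegree ≤ D.R.card + 1 :=
  (totalDegree_mul _ _).trans
    ((add_le_add (D.numP_deg k η) (D.cof_deg η)).trans (D.G_cards hη))

lemma WInv_one : D.WInv 1 := by intro w _ z; simp

/-- degree estimate for `C p - L p` -/
lemma deg_CL {k : (ι → ℤ) → ℂ} {p c q : MvPolynomial ι ℂ} {d : ℕ}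
    (hd : p.totalDegree ≤ d) (hc : D.PiR * c = D.Npoly k 1) (hq : D.PiR * q = D.Npoly k p) :
    (c * p - q).totalDegree ≤ d := by
  rw [← DL_succ]
  apply D.DL_of_PiR
  have h1 : D.PiR * (c * p - q) = ∑ η ∈ D.Λ₁, D.G k η * (p - shiftP η p) := by
    rw [mul_sub, ← mul_assoc, hc, hq, Npoly, Npoly, Finset.sum_mul, ← Finset.sum_sub_distrib]
    apply Finset.sum_congr rfl
    intro η _
    have : shiftP η (1 : MvPolynomial ι ℂ) = 1 := by simp [shiftP]
    rw [this]; ring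
  rw [h1]
  apply DL.sum
  intro η hη
  have := DL.mul_left (D.G_deg k hη) (DL_sub_shiftP η p hd)
  exact this.mono (by omega)

lemma deg_C {k : (ι → ℤ) → ℂ} {c : MvPolynomial ι ℂ}
    (hc : D.PiR * c = D.Npoly k 1) : c.totalDegree ≤ 1 := by
  rw [← DL_succ]
  apply D.DL_of_PiR
  rw [hc, Npoly]
  apply DL.sum
  intro η hη
  have : shiftP η (1 : MvPolynomial ι ℂ) = 1 := by simp [shiftP]
  rw [this, mul_one, show D.R.card + (1 + 1) = (D.R.card + 1) + 1 by ring, DL_succ]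
  exact D.G_deg k hη

lemma deg_CC {k k' : (ι → ℤ) → ℂ} {c c' : MvPolynomial ι ℂ}
    (hc : D.PiR * c = D.Npoly k 1) (hc' : D.PiR * c' = D.Npoly k' 1) :
    (c - c').totalDegree ≤ 0 := by
  rw [← DL_succ]
  apply D.DL_of_PiR
  rw [mul_sub, hc, hc', Npoly, Npoly, ← Finset.sum_sub_distrib]
  apply DL.sum
  intro η hη
  have : shiftP η (1 : MvPolynomial ι ℂ) = 1 := by simp [shiftP]
  rw [this, mul_one, mul_one, G, G, ← sub_mul, mul_comm]
  have h1 : SameTop (D.numP k η) (D.numP k' η)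
      (∑ ω ∈ D.Φ.filter (fun ω => 0 < pairZ ω η), 1) := by
    apply SameTop.prod
    intro ω _
    exact SameTop.sub_C (totalDegree_lin_le ω) _ _
  rw [← Finset.card_eq_sum_ones] at h1
  refine (DL.mul_left (D.cof_deg η) h1.2.2).mono ?_
  have := D.G_cards hη
  omega

end Data

lemma zero_of_countable {f : ℂ → ℂ} (hf : Continuous f) {s : Set ℂ} (hs : s.Countable)
    (h : ∀ t, t ∉ s → f t = 0) : f 0 = 0 := by
  have h1 : Dense sᶜ := Set.Countable.dense_compl ℂ hs
  have h2 : f = fun _ => 0 := Continuous.ext_on h1 hf continuous_const (fun t ht => h t ht)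
  rw [h2]

lemma countable_bad (a : ℂ) {b : ℂ} (hb : b ≠ 0) : {t : ℂ | ∃ n : ℤ, a + t * b = n}.Countable := by
  have : {t : ℂ | ∃ n : ℤ, a + t * b = n} ⊆ Set.range (fun n : ℤ => ((n : ℂ) - a) / b) := by
    rintro t ⟨n, hn⟩
    refine ⟨n, ?_⟩
    simp only
    rw [← hn]; field_simp; ring
  exact (Set.countable_range _).mono this

lemma e_LamPlus (i : ι) : e i ∈ (LamPlus : Set (ι → ℤ)) := by
  intro j
  unfold e
  rw [Pi.single_apply]; split_ifs <;> norm_num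

lemma evalC_one (a : ι → ℤ) (t : ℂ) : evalC a (fun _ => t) = t * ((∑ i, a i : ℤ) : ℂ) := by
  simp [evalC, Finset.mul_sum, mul_comm]

namespace Data

variable (D : Data ι)

lemma G_vanish {k : (ι → ℤ) → ℂ} {ρ : ι → ℂ} (hk : ∀ i, k (e i) = ρ i) {μ η : ι → ℤ}
    (hμ : μ ∈ LamPlus) (hη : η ∈ D.Λ₁) (h : μ - η ∉ LamPlus) :
    eval (ρ + toV μ) (D.G k η) = 0 := by
  simp only [LamPlus, Set.mem_ofPred_eq, not_forall, Pi.sub_apply] at h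
  obtain ⟨i, hi⟩ := h
  have h0 := hμ i
  have h1 := D.Φ_Λ₁ hη (D.e_mem_Φ i)
  rw [pairZ_e_left] at h1
  have h2 : μ i = 0 := by omega
  rw [G, map_mul, numP, eval_prod, Finset.prod_eq_zero (i := e i), zero_mul]
  · rw [Finset.mem_filter, pairZ_e_left]
    exact ⟨D.e_mem_Φ i, by omega⟩
  · rw [map_sub, eval_lin, eval_C, hk, evalC_e]
    simp [toV, h2]

lemma neg_notMem {η : ι → ℤ} (hη : η ∈ D.Λ₁) : (0 : ι → ℤ) - η ∉ LamPlus := by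
  intro h
  have h1 := D.ell_Λ₁ hη
  have : pairZ D.ell η ≤ 0 := by
    apply Finset.sum_nonpos
    intro i _
    have h2 := h i
    have h3 := D.C6 i
    simp only [Pi.sub_apply, Pi.zero_apply] at h2
    exact mul_nonpos_of_nonneg_of_nonpos h3.le (by omega)
  omega

lemma ei_sub {i : ι} (hi : D.ell i = 1) {η : ι → ℤ} (hη : η ∈ D.Λ₁) (h : e i - η ∈ LamPlus) :
    η = e i := by
  have h1 := D.ell_Λ₁ hη
  have h2 : pairZ D.ell (e i - η) = 0 := by
    rw [pairZ_sub_right, pairZ_e_right, hi, h1]; rfl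
  have h3 := (Finset.sum_eq_zero_iff_of_nonneg (fun j _ =>
    mul_nonneg (D.C6 j).le (h j))).mp h2
  ext j
  have h4 := (mul_eq_zero.mp (h3 j (Finset.mem_univ j))).resolve_left (D.C6 j).ne'
  simp only [Pi.sub_apply] at h4
  omega

lemma cst_ne_zero (η : ι → ℤ) : D.cst η ≠ 0 := by
  rw [cst, Finset.prod_ne_zero_iff]
  intro α hα
  have := (Finset.mem_filter.mp hα).2
  exact_mod_cast this.ne'

lemma PiR_split (η : ι → ℤ) (z : ι → ℂ) : eval z D.PiR =
    (∏ α ∈ D.R.filter (fun α => 0 < pairZ α η), evalC α z) * eval z (D.cofP η) := by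
  rw [PiR, cofP, eval_prod, eval_prod]
  simp only [eval_lin]
  rw [Finset.prod_filter_mul_prod_filter_not]

lemma eval_PiR_ne {z : ι → ℂ} (h : ∀ α ∈ D.R, evalC α z ≠ 0) : eval z D.PiR ≠ 0 := by
  rw [PiR, eval_prod, Finset.prod_ne_zero_iff]
  intro α hα
  rw [eval_lin]; exact h α hα

lemma C_coeff (hreg : ∀ α ∈ D.R, ∑ i, α i ≠ 0) {k : (ι → ℤ) → ℂ} {c : MvPolynomial ι ℂ}
    (hc : D.PiR * c = D.Npoly k 1) {i : ι} (hi : D.ell i = 1) (x : ι → ℂ) :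
    eval (x + toV (e i)) c - eval x c = 1 := by
  obtain ⟨c0, a, hca⟩ := affine_of_totalDegree_le_one c (D.deg_C hc)
  have haff : ∀ y, eval (y + toV (e i)) c - eval y c = a i := by
    intro y
    rw [hca]
    simp only [map_add, eval_C, map_sum, map_mul, eval_X, Pi.add_apply, mul_add,
      Finset.sum_add_distrib]
    have : ∑ j, a j * toV (e i) j = a i := by
      simp [toV, e, Pi.single_apply]
    rw [this]; ring
  rw [haff]
  set S : Set ℂ := (⋃ α ∈ D.R, {t : ℂ | ∃ n : ℤ, ((α i : ℤ) : ℂ) + t * ((∑ j, α j : ℤ) : ℂ) = n}) ∪ {0}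
    with hS
  have hScount : S.Countable := by
    refine Set.Countable.union ?_ (Set.countable_singleton 0)
    refine Set.Countable.biUnion (D.R.finite_toSet.countable) ?_
    intro α hα
    exact countable_bad _ (by exact_mod_cast hreg α hα)
  have key := zero_of_countable (s := S) (f := fun t =>
    a i * (∏ α ∈ D.R.filter (fun α => 0 < pairZ α (e i)), (t * ((∑ j, α j : ℤ) : ℂ) + (α i : ℂ)))
    - (∏ ω ∈ D.Φ.filter (fun ω => 0 < pairZ ω (e i)), (t * ((∑ j, ω j : ℤ) : ℂ) + (ω i : ℂ) - t))
      * D.cst (e i)) (by fun_prop) hScount ?_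
  · simp only [zero_mul, zero_add, sub_zero] at key
    have h1 : ∏ α ∈ D.R.filter (fun α => 0 < pairZ α (e i)), ((α i : ℤ) : ℂ) = D.cst (e i) := by
      rw [cst]; simp only [pairZ_e_right]
    have h2 : ∏ ω ∈ D.Φ.filter (fun ω => 0 < pairZ ω (e i)), ((ω i : ℤ) : ℂ) = 1 := by
      apply Finset.prod_eq_one
      intro ω hω
      rw [Finset.mem_filter, pairZ_e_right] at hω
      have := D.C7 i hi ω (Or.inr hω.1)
      have h3 : ω i = 1 := by omega
      rw [h3]; simp
    rw [h1, h2, one_mul] at key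
    have h3 := D.cst_ne_zero (e i)
    apply mul_right_cancel₀ h3
    rw [one_mul]; exact sub_eq_zero.mp key
  · intro t ht
    simp only [hS, Set.mem_union, Set.mem_iUnion, Set.mem_ofPred_eq, Set.mem_singleton_iff, not_or,
      not_exists] at ht
    obtain ⟨ht1, ht0⟩ := ht
    obtain ⟨ct, _, hct⟩ := D.exists_L hreg (k := fun _ => t) (fun _ _ _ _ => rfl) D.WInv_one
    have hconst := totalDegree_eq_zero_iff_eq_C.mp (Nat.le_zero.mp (D.deg_CC hct hc))
    have hct' : ct = c + C (coeff 0 (ct - c)) := by rw [← hconst]; ring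
    have hkr : ∀ j : ι, (fun _ : ι → ℤ => t) (e j) = (fun _ : ι => t) j := fun _ => rfl
    set z0 : ι → ℂ := fun _ => t with hz0
    have hP0 : eval z0 D.PiR ≠ 0 := by
      apply D.eval_PiR_ne
      intro α hα
      rw [hz0, evalC_one]
      exact mul_ne_zero ht0 (by exact_mod_cast hreg α hα)
    have hz1 : ∀ α : ι → ℤ, evalC α (z0 + toV (e i)) = t * ((∑ j, α j : ℤ) : ℂ) + (α i : ℂ) := by
      intro α
      rw [evalC_add_right, evalC_toV, pairZ_e_right, hz0, evalC_one]
    have hP1 : eval (z0 + toV (e i)) D.PiR ≠ 0 := by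
      apply D.eval_PiR_ne
      intro α hα h
      rw [hz1] at h
      exact ht1 α hα 0 (by rw [Int.cast_zero, ← h]; ring)
    have e0 : eval z0 ct = 0 := by
      have h1 := congrArg (eval z0) hct
      rw [map_mul, eval_Npoly, Finset.sum_eq_zero] at h1
      · exact (mul_eq_zero.mp h1).resolve_left hP0
      · intro η hη
        have h2 := D.G_vanish (k := fun _ => t) (ρ := z0) hkr (μ := 0) (fun _ => le_rfl) hη (D.neg_notMem hη)
        have h3 : z0 + toV (0 : ι → ℤ) = z0 := by
          funext j; simp [toV, hz0]
        rw [h3] at h2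
        rw [h2, zero_mul]
    have e1 : eval (z0 + toV (e i)) D.PiR * eval (z0 + toV (e i)) ct =
        eval (z0 + toV (e i)) (D.G (fun _ => t) (e i)) := by
      have h1 := congrArg (eval (z0 + toV (e i))) hct
      rw [map_mul, eval_Npoly, Finset.sum_eq_single (e i)] at h1
      · rw [h1]; simp
      · intro η hη hne
        have h2 := D.G_vanish (k := fun _ => t) (ρ := z0) hkr (e_LamPlus i) hη (fun h => hne (D.ei_sub hi hη h))
        rw [h2, zero_mul]
      · intro h; exact absurd (D.e_mem_Λ₁ hi) h
    have e2 : eval (z0 + toV (e i)) ct = a i := by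
      rw [← haff z0]
      have h1 : eval (z0 + toV (e i)) ct = eval (z0 + toV (e i)) ct - eval z0 ct := by
        rw [e0, sub_zero]
      rw [h1, hct']
      simp
    rw [e2, D.PiR_split (e i), G, map_mul, map_mul, eval_C] at e1
    have hcof : eval (z0 + toV (e i)) (D.cofP (e i)) ≠ 0 := by
      rw [D.PiR_split (e i)] at hP1
      exact right_ne_zero_of_mul hP1
    rw [numP, eval_prod] at e1
    simp only [map_sub, eval_lin, eval_C, hz1] at e1
    apply mul_right_cancel₀ hcof
    rw [zero_mul]
    linear_combination e1

lemma C_eq (hreg : ∀ α ∈ D.R, ∑ i, α i ≠ 0) {k : (ι → ℤ) → ℂ} {c : MvPolynomial ι ℂ}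
    (hcW : D.WInv c) (hc : D.PiR * c = D.Npoly k 1) : ∃ c0, c = C c0 + lin D.ell := by
  obtain ⟨c0, a, hca⟩ := affine_of_totalDegree_le_one c (D.deg_C hc)
  have hev : ∀ z, eval z c = c0 + ∑ i, a i * z i := by
    intro z; rw [hca]; simp
  have ha : a = fun i => (D.ell i : ℂ) := by
    apply D.C8
    · intro w hw z
      have := hcW w hw z
      rw [hev, hev] at this
      exact add_left_cancel this
    · intro w hw z
      have h1 := evalC_actV w D.ell z
      rw [D.C4 _ (D.symm_mem hw)] at h1
      exact h1
    · intro i hi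
      rw [hi, Int.cast_one, ← D.C_coeff hreg hc hi 0, hev, hev]
      simp [toV, e, Pi.single_apply]
  refine ⟨c0, ?_⟩
  rw [hca, ha, lin]

/-- the operator `ℓ - L` preserves degrees -/
theorem main_L (hreg : ∀ α ∈ D.R, ∑ i, α i ≠ 0) {k : (ι → ℤ) → ℂ} (hk : D.KInv k)
    {p : MvPolynomial ι ℂ} (hp : D.WInv p) {d : ℕ} (hd : p.totalDegree ≤ d) :
    ∃ q, D.WInv q ∧ q.totalDegree ≤ d ∧ ∀ z, eval z D.PiR * eval z q =
      eval z D.PiR * (evalC D.ell z * eval z p)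
        - ∑ η ∈ D.Λ₁, eval z (D.G k η) * eval (z - toV η) p := by
  obtain ⟨c, hcW, hc⟩ := D.exists_L hreg hk D.WInv_one
  obtain ⟨q, hqW, hq⟩ := D.exists_L hreg hk hp
  obtain ⟨c0, hc0⟩ := D.C_eq hreg hcW hc
  refine ⟨c * p - q - C c0 * p, ?_, ?_, ?_⟩
  · intro w hw z
    simp only [map_sub, map_mul, eval_C, hcW w hw z, hqW w hw z, hp w hw z]
  · refine (totalDegree_sub _ _).trans (max_le (D.deg_CL hd hc hq) ?_)
    refine (totalDegree_mul _ _).trans ?_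
    rw [totalDegree_C, zero_add]; exact hd
  · intro z
    rw [← eval_Npoly, ← hq, hc0]
    simp only [map_sub, map_mul, map_add, eval_C, eval_lin]
    ring

end Data

namespace Data

variable (D : Data ι)

/-- the parameter function attached to `ρ` -/
def kOf (ρ : ι → ℂ) (ω : ι → ℤ) : ℂ :=
  if h : ∃ i, ∃ w ∈ D.W, ω = w (e i) then ρ h.choose else 0

lemma kOf_we {ρ : ι → ℂ} (hρ : D.InV0 ρ) {w : (ι → ℤ) ≃ₗ[ℤ] (ι → ℤ)} (hw : w ∈ D.W) (i : ι) :
    D.kOf ρ (w (e i)) = ρ i := by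
  have h : ∃ j, ∃ w' ∈ D.W, w (e i) = w' (e j) := ⟨i, w, hw, rfl⟩
  rw [kOf, dif_pos h]
  obtain ⟨w', hw', hww⟩ := h.choose_spec
  symm
  apply hρ
  refine ⟨w⁻¹ * w', D.W.mul_mem (D.W.inv_mem hw) hw', Or.inl ?_⟩
  have : (w⁻¹ * w') (e h.choose) = w.symm (w' (e h.choose)) := rfl
  rw [this, ← hww, LinearEquiv.symm_apply_apply]

lemma kOf_e {ρ : ι → ℂ} (hρ : D.InV0 ρ) (i : ι) : D.kOf ρ (e i) = ρ i :=
  D.kOf_we hρ D.W.one_mem i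

lemma kOf_inv {ρ : ι → ℂ} (hρ : D.InV0 ρ) : D.KInv (D.kOf ρ) := by
  intro w hw ω hω
  obtain ⟨u, hu, i, rfl⟩ := (D.Φ_spec _).mp hω
  have : w (u (e i)) = (w * u) (e i) := rfl
  rw [this, D.kOf_we hρ (D.W.mul_mem hw hu), D.kOf_we hρ hu]

/-- the dominant lattice points of level at most `d` -/
def Sd (d : ℕ) : Finset (ι → ℤ) :=
  (Finset.Icc (0 : ι → ℤ) (fun _ => (d : ℤ))).filter (fun μ => pairZ D.ell μ ≤ d)

lemma mem_Sd {d : ℕ} {μ : ι → ℤ} : μ ∈ D.Sd d ↔ μ ∈ LamPlus ∧ pairZ D.ell μ ≤ d := by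
  rw [Sd, Finset.mem_filter, Finset.mem_Icc]
  constructor
  · rintro ⟨⟨h1, _⟩, h3⟩
    exact ⟨fun i => h1 i, h3⟩
  · rintro ⟨h1, h2⟩
    refine ⟨⟨fun i => h1 i, fun i => ?_⟩, h2⟩
    have h3 : D.ell i * μ i ≤ pairZ D.ell μ :=
      Finset.single_le_sum (f := fun i => D.ell i * μ i)
        (fun j _ => mul_nonneg (D.C6 j).le (h1 j)) (Finset.mem_univ i)
    have h4 := D.C6 i
    have h5 := h1 i
    simp only
    nlinarith

lemma ell_nonneg {μ : ι → ℤ} (h : μ ∈ LamPlus) : 0 ≤ pairZ D.ell μ :=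
  Finset.sum_nonneg (fun j _ => mul_nonneg (D.C6 j).le (h j))

lemma LI {ρ : ι → ℂ} {pl : (ι → ℤ) → MvPolynomial ι ℂ}
    (hpl : ∀ lam : ι → ℤ, lam ∈ LamPlus → D.CapelliAt ρ lam (pl lam))
    (S : Finset (ι → ℤ)) (hS : ∀ ν ∈ S, ν ∈ LamPlus) (c : (ι → ℤ) → ℂ)
    (h : ∀ ν ∈ S, ∑ ν' ∈ S, c ν' * eval (ρ + toV ν) (pl ν') = 0) : ∀ ν ∈ S, c ν = 0 := by
  have key : ∀ n : ℕ, ∀ ν ∈ S, (pairZ D.ell ν).toNat = n → c ν = 0 := by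
    intro n
    induction n using Nat.strong_induction_on with
    | _ n ih =>
      intro ν hν hn
      have h1 := h ν hν
      rw [Finset.sum_eq_single ν] at h1
      · rw [(hpl ν (hS ν hν)).2.2 ν (hS ν hν) le_rfl, if_pos rfl, mul_one] at h1
        exact h1
      · intro ν' hν' hne
        by_cases hlt : pairZ D.ell ν' < pairZ D.ell ν
        · have h2 := D.ell_nonneg (hS ν' hν')
          rw [ih _ (by omega) ν' hν' rfl, zero_mul]
        · rw [(hpl ν' (hS ν' hν')).2.2 ν (hS ν hν) (by omega), if_neg (Ne.symm hne), mul_zero]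
      · intro h; exact absurd hν h
  intro ν hν
  exact key _ ν hν rfl

lemma exists_level {q : MvPolynomial ι ℂ} :
    ∃ lam ∈ (LamPlus : Set (ι → ℤ)), pairZ D.ell lam = q.totalDegree := by
  by_cases hm : q.totalDegree = 0
  · exact ⟨0, fun _ => le_rfl, by rw [hm]; simp [pairZ]⟩
  · obtain ⟨i, hi⟩ : ∃ i, D.ell i = 1 := by
      by_contra hcon
      push Not at hcon
      have h8 := D.C8 (fun i => (D.ell i : ℂ)) 0 (by
        intro w hw z
        have h1 := evalC_actV w D.ell z
        rw [D.C4 _ (D.symm_mem hw)] at h1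
        exact h1) (by intro w _ z; simp) (fun i hi => absurd hi (hcon i))
      rcases isEmpty_or_nonempty ι with hι | ⟨⟨j⟩⟩
      · apply hm
        rw [eq_C_of_isEmpty q, totalDegree_C]
      · have h9 := congrFun h8 j
        have h10 := D.C6 j
        simp at h9
        omega
    refine ⟨(q.totalDegree : ℤ) • e i, ?_, ?_⟩
    · intro j
      have := e_LamPlus i j
      simp only [Pi.smul_apply, smul_eq_mul]
      positivity
    · have : pairZ D.ell ((q.totalDegree : ℤ) • e i) = q.totalDegree * pairZ D.ell (e i) := by
        simp only [pairZ, Pi.smul_apply, smul_eq_mul, Finset.mul_sum]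
        apply Finset.sum_congr rfl; intro j _; ring
      rw [this, pairZ_e_right, hi, mul_one]

lemma C0_inj {ρ' : ι → ℂ} (hC : ∀ lam : ι → ℤ, lam ∈ LamPlus →
      ∃! p : MvPolynomial ι ℂ, D.WInv p ∧
        p.totalDegree = (pairZ D.ell lam).toNat ∧
        ∀ μ : ι → ℤ, μ ∈ LamPlus → pairZ D.ell μ ≤ pairZ D.ell lam →
          eval (ρ' + toV μ) p = if μ = lam then 1 else 0)
    {q : MvPolynomial ι ℂ} (hq : D.WInv q) {d : ℕ} (hd : q.totalDegree ≤ d)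
    (h : ∀ μ ∈ D.Sd d, eval (ρ' + toV μ) q = 0) : q = 0 := by
  obtain ⟨lam, hlam, hlq⟩ := D.exists_level (q := q)
  obtain ⟨p, ⟨hpW, hpd, hpv⟩, huniq⟩ := hC lam hlam
  rw [hlq] at hpd hpv
  simp only [Int.toNat_natCast, hlq] at hpd huniq
  have hv : ∀ μ : ι → ℤ, μ ∈ LamPlus → pairZ D.ell μ ≤ q.totalDegree →
      eval (ρ' + toV μ) q = 0 := fun μ h1 h2 => h μ (D.mem_Sd.mpr ⟨h1, by omega⟩)
  by_cases h1 : (p + q).totalDegree = q.totalDegree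
  · have := huniq (p + q) ⟨fun w hw z => by simp only [map_add, hpW w hw z, hq w hw z], h1,
      fun μ hμ1 hμ2 => by rw [map_add, hv μ hμ1 hμ2, add_zero, hpv μ hμ1 hμ2]⟩
    simpa using this
  · by_cases h2 : (p - q).totalDegree = q.totalDegree
    · have := huniq (p - q) ⟨fun w hw z => by simp only [map_sub, hpW w hw z, hq w hw z], h2,
        fun μ hμ1 hμ2 => by rw [map_sub, hv μ hμ1 hμ2, sub_zero, hpv μ hμ1 hμ2]⟩
      simpa using this
    · exfalso
      have h3 := totalDegree_add p q
      have h4 := totalDegree_sub p q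
      rw [hpd, max_self] at h3 h4
      have h5 : p = C (1 / 2 : ℂ) * ((p + q) + (p - q)) := by
        have : C (1 / 2 : ℂ) * ((p + q) + (p - q)) = C (1 / 2 : ℂ) * C 2 * p := by
          rw [show (C (2 : ℂ) : MvPolynomial ι ℂ) = 2 from map_ofNat C 2]; ring
        rw [this, ← C_mul]; norm_num
      have h6 : p.totalDegree ≤ max (p + q).totalDegree (p - q).totalDegree := by
        conv_lhs => rw [h5]
        refine (totalDegree_mul _ _).trans ?_
        rw [totalDegree_C, zero_add]
        exact totalDegree_add _ _
      omega

lemma comb_inv {κ : Type*} (S : Finset κ) (c : κ → ℂ) (p : κ → MvPolynomial ι ℂ)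
    (hp : ∀ ν ∈ S, D.WInv (p ν)) : D.WInv (∑ ν ∈ S, C (c ν) * p ν) := by
  intro w hw z
  simp only [map_sum, map_mul, eval_C]
  exact Finset.sum_congr rfl (fun ν hν => by rw [hp ν hν w hw])

lemma comb_deg {κ : Type*} (S : Finset κ) (c : κ → ℂ) (p : κ → MvPolynomial ι ℂ) (d : ℕ)
    (hp : ∀ ν ∈ S, (p ν).totalDegree ≤ d) : (∑ ν ∈ S, C (c ν) * p ν).totalDegree ≤ d := by
  apply totalDegree_finsetSum_le
  intro ν hν
  refine (totalDegree_mul _ _).trans ?_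
  rw [totalDegree_C, zero_add]
  exact hp ν hν

lemma pl_deg {ρ : ι → ℂ} {pl : (ι → ℤ) → MvPolynomial ι ℂ}
    (hpl : ∀ lam : ι → ℤ, lam ∈ LamPlus → D.CapelliAt ρ lam (pl lam)) {d : ℕ} {ν : ι → ℤ}
    (hν : ν ∈ D.Sd d) : (pl ν).totalDegree ≤ d := by
  rw [D.mem_Sd] at hν
  have := (hpl ν hν.1).2.1
  omega

/-- if evaluations at `σ + S_d` separate, and the matrix is injective, everything is a combination -/
lemma span (hC0 : D.C0) {ρ : ι → ℂ} {pl : (ι → ℤ) → MvPolynomial ι ℂ}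
    (hpl : ∀ lam : ι → ℤ, lam ∈ LamPlus → D.CapelliAt ρ lam (pl lam)) {d : ℕ}
    {q : MvPolynomial ι ℂ} (hq : D.WInv q) (hd : q.totalDegree ≤ d) :
    ∃ c : D.Sd d → ℂ, q = ∑ ν, C (c ν) * pl ν := by
  obtain ⟨ρ', _, _, _, hC⟩ := hC0
  let M : Matrix (D.Sd d) (D.Sd d) ℂ := fun μ ν => eval (ρ' + toV (μ : ι → ℤ)) (pl ν)
  have hW : ∀ c : D.Sd d → ℂ, D.WInv (∑ ν, C (c ν) * pl ν) := fun c =>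
    D.comb_inv _ _ _ (fun ν _ => (hpl ν (D.mem_Sd.mp ν.2).1).1)
  have hdeg : ∀ c : D.Sd d → ℂ, (∑ ν, C (c ν) * pl ν).totalDegree ≤ d := fun c =>
    comb_deg _ _ _ d (fun ν _ => D.pl_deg hpl ν.2)
  have hM : ∀ (c : D.Sd d → ℂ) (μ : D.Sd d), eval (ρ' + toV (μ : ι → ℤ)) (∑ ν, C (c ν) * pl ν)
      = Matrix.mulVec M c μ := by
    intro c μ
    simp only [map_sum, map_mul, eval_C, Matrix.mulVec, dotProduct, M]
    exact Finset.sum_congr rfl (fun _ _ => mul_comm _ _)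
  have hinj : Function.Injective (Matrix.mulVecLin M) := by
    rw [← LinearMap.ker_eq_bot, LinearMap.ker_eq_bot']
    intro c hc
    have h0 : (∑ ν, C (c ν) * pl ν) = 0 := by
      apply D.C0_inj hC (hW c) (hdeg c)
      intro μ hμ
      rw [hM c ⟨μ, hμ⟩]
      exact congrFun hc ⟨μ, hμ⟩
    have h1 := D.LI hpl (D.Sd d) (fun ν hν => (D.mem_Sd.mp hν).1)
      (fun ν => if h : ν ∈ D.Sd d then c ⟨ν, h⟩ else 0) (by
        intro ν _
        have h2 := congrArg (eval (ρ + toV ν)) h0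
        rw [map_sum, map_zero] at h2
        rw [← Finset.sum_coe_sort, ← h2]
        apply Finset.sum_congr rfl
        intro ν' _
        simp)
    funext ν
    have := h1 ν ν.2
    simpa using this
  obtain ⟨c, hc⟩ := (LinearMap.injective_iff_surjective.mp hinj)
    (fun μ => eval (ρ' + toV (μ : ι → ℤ)) q)
  refine ⟨c, ?_⟩
  rw [← sub_eq_zero]
  apply D.C0_inj hC (d := d)
  · intro w hw z
    rw [map_sub, map_sub, hq w hw, hW c w hw]
  · exact (totalDegree_sub _ _).trans (max_le hd (hdeg c))
  · intro μ hμ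
    have h1 := congrFun hc ⟨μ, hμ⟩
    rw [Matrix.mulVecLin_apply, ← hM] at h1
    rw [map_sub, h1, sub_self]

/-- extra vanishing, generic case -/
lemma extra_generic (hreg : ∀ α ∈ D.R, ∑ i, α i ≠ 0) {σ : ι → ℂ} (hσ : D.InV0 σ)
    (hnonint : ∀ α ∈ D.R, ∀ n : ℤ, evalC α σ ≠ n) {lam : ι → ℤ} {d : ℕ}
    (hld : pairZ D.ell lam = d)
    (hinj : ∀ q : MvPolynomial ι ℂ, D.WInv q → q.totalDegree ≤ d →
      (∀ μ ∈ D.Sd d, eval (σ + toV μ) q = 0) → q = 0)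
    {Q : MvPolynomial ι ℂ} (hQ : D.WInv Q) (hQd : Q.totalDegree ≤ d)
    (hQv : ∀ μ ∈ D.Sd d, μ ≠ lam → eval (σ + toV μ) Q = 0) :
    ∀ μ ∈ (LamPlus : Set (ι → ℤ)), μ - lam ∉ D.Lam → eval (σ + toV μ) Q = 0 := by
  obtain ⟨q, hqW, hqd, hq⟩ := D.main_L hreg (D.kOf_inv hσ) hQ hQd
  have hP : ∀ μ : ι → ℤ, eval (σ + toV μ) D.PiR ≠ 0 := by
    intro μ
    apply D.eval_PiR_ne
    intro α hα h
    rw [evalC_add_right, evalC_toV] at h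
    apply hnonint α hα (-pairZ α μ)
    push_cast
    linear_combination h
  have hsh : ∀ μ η : ι → ℤ, σ + toV μ - toV η = σ + toV (μ - η) := by
    intro μ η; rw [toV_sub]; ring
  have hq0 : q - C (evalC D.ell (σ + toV lam)) * Q = 0 := by
    apply hinj
    · intro w hw z
      simp only [map_sub, map_mul, eval_C, hqW w hw z, hQ w hw z]
    · refine (totalDegree_sub _ _).trans (max_le hqd ((totalDegree_mul _ _).trans ?_))
      rw [totalDegree_C, zero_add]; exact hQd
    · intro μ hμ
      apply mul_left_cancel₀ (hP μ)
      have hμ' := D.mem_Sd.mp hμ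
      have h1 := hq (σ + toV μ)
      rw [Finset.sum_eq_zero, sub_zero] at h1
      · rw [map_sub, mul_sub, h1, map_mul, eval_C, mul_zero]
        by_cases hml : μ = lam
        · rw [hml]; ring
        · rw [hQv μ hμ hml]; ring
      · intro η hη
        by_cases hm : μ - η ∈ LamPlus
        · have h2 : pairZ D.ell (μ - η) = pairZ D.ell μ - 1 := by
            rw [pairZ_sub_right, D.ell_Λ₁ hη]
          rw [hsh, hQv (μ - η) (D.mem_Sd.mpr ⟨hm, by omega⟩) (by
            rintro h3; rw [h3] at h2; omega), mul_zero]
        · rw [D.G_vanish (D.kOf_e hσ) hμ'.1 hη hm, zero_mul]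
  have hqQ : q = C (evalC D.ell (σ + toV lam)) * Q := sub_eq_zero.mp hq0
  have key : ∀ n : ℕ, ∀ μ ∈ (LamPlus : Set (ι → ℤ)), (pairZ D.ell μ).toNat = n →
      μ - lam ∉ D.Lam → eval (σ + toV μ) Q = 0 := by
    intro n
    induction n using Nat.strong_induction_on with
    | _ n ih =>
      intro μ hμ hn hnot
      have hne : μ ≠ lam := by
        rintro rfl
        apply hnot
        rw [sub_self]; exact D.Lam.zero_mem
      by_cases hle : pairZ D.ell μ ≤ d
      · exact hQv μ (D.mem_Sd.mpr ⟨hμ, hle⟩) hne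
      · have h1 := hq (σ + toV μ)
        rw [Finset.sum_eq_zero, sub_zero, hqQ, map_mul, eval_C] at h1
        · have h2 := mul_left_cancel₀ (hP μ) h1
          rw [evalC_add_right, evalC_add_right, evalC_toV, evalC_toV, hld] at h2
          have h3 : ((pairZ D.ell μ : ℂ) - d) * eval (σ + toV μ) Q = 0 := by
            push_cast at h2
            linear_combination -h2
          refine (mul_eq_zero.mp h3).resolve_left ?_
          rw [sub_eq_zero]
          intro h4
          have h5 : pairZ D.ell μ = (d : ℤ) := by exact_mod_cast h4
          omega
        · intro η hη
          by_cases hm : μ - η ∈ LamPlus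
          · have h2 : pairZ D.ell (μ - η) = pairZ D.ell μ - 1 := by
              rw [pairZ_sub_right, D.ell_Λ₁ hη]
            rw [hsh, ih _ (by omega) (μ - η) hm rfl, mul_zero]
            intro h3
            apply hnot
            have : μ - lam = (μ - η - lam) + η := by ring
            rw [this]
            exact D.Lam.add_mem h3 (AddSubmonoid.subset_closure hη)
          · rw [D.G_vanish (D.kOf_e hσ) hμ hη hm, zero_mul]
  intro μ hμ
  exact key _ μ hμ rfl

/-- extra vanishing -/
theorem extra (hC0 : D.C0) {ρ : ι → ℂ} (hρ : D.InV0 ρ) {pl : (ι → ℤ) → MvPolynomial ι ℂ}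
    (hpl : ∀ lam : ι → ℤ, lam ∈ LamPlus → D.CapelliAt ρ lam (pl lam))
    {lam μ : ι → ℤ} (hlam : lam ∈ LamPlus) (hμ : μ ∈ LamPlus) (hnot : μ - lam ∉ D.Lam) :
    eval (ρ + toV μ) (pl lam) = 0 := by
  have hreg := D.hreg_of hρ pl hpl
  obtain ⟨d, hld⟩ : ∃ d : ℕ, pairZ D.ell lam = d := by
    have := D.ell_nonneg hlam
    exact ⟨(pairZ D.ell lam).toNat, by omega⟩
  let ρt : ℂ → ι → ℂ := fun t => ρ + fun _ => t
  let A : ℂ → Matrix (D.Sd d) (D.Sd d) ℂ :=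
    fun t => Matrix.of fun μ ν => eval (ρt t + toV (μ : ι → ℤ)) (pl ν)
  let l0 : D.Sd d := ⟨lam, D.mem_Sd.mpr ⟨hlam, hld.le⟩⟩
  have hρt : Continuous ρt := by
    apply continuous_const.add
    exact continuous_pi (fun _ => continuous_id)
  have hevc : ∀ (μ : ι → ℤ) (p : MvPolynomial ι ℂ),
      Continuous (fun t => eval (ρt t + toV μ) p) := fun μ p =>
    (MvPolynomial.continuous_eval p).comp (hρt.add continuous_const)
  have hA : Continuous A := continuous_matrix (fun μ ν => hevc μ (pl ν))
  let Q : ℂ → MvPolynomial ι ℂ := fun t => ∑ ν, C ((A t).adjugate ν l0) * pl ν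
  let F : ℂ → ℂ := fun t => (A t).det * eval (ρt t + toV μ) (Q t)
  have hF : Continuous F := by
    apply hA.matrix_det.mul
    simp only [Q, map_sum, map_mul, eval_C]
    apply continuous_finsetSum
    intro ν _
    exact (hA.matrix_adjugate.matrix_elem ν l0).mul (hevc μ _)
  set S : Set ℂ := ⋃ α ∈ D.R, {t : ℂ | ∃ n : ℤ, evalC α ρ + t * ((∑ j, α j : ℤ) : ℂ) = n}
    with hS
  have hScount : S.Countable := by
    refine Set.Countable.biUnion (D.R.finite_toSet.countable) ?_
    intro α hα
    exact countable_bad _ (by exact_mod_cast hreg α hα)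
  have hF0 : F 0 = 0 := by
    apply zero_of_countable hF hScount
    intro t ht
    simp only [hS, Set.mem_iUnion, Set.mem_ofPred_eq, not_exists] at ht
    by_cases hdet : (A t).det = 0
    · simp only [F, hdet, zero_mul]
    · have : eval (ρt t + toV μ) (Q t) = 0 := by
        apply D.extra_generic hreg (σ := ρt t) (lam := lam) (d := d) ?_ ?_ hld ?_ ?_ ?_ ?_ μ hμ hnot
        · intro i j hij
          simp only [ρt, Pi.add_apply, hρ i j hij]
        · intro α hα n hn
          apply ht α hα n
          rw [← hn, evalC_add_right, evalC_one]
        · intro q hq hqd hqv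
          obtain ⟨c, hc⟩ := D.span hC0 hpl hq hqd
          have h1 : Matrix.mulVec (A t) c = 0 := by
            funext μ'
            have h2 := hqv μ' μ'.2
            rw [hc, map_sum] at h2
            simp only [map_mul, eval_C] at h2
            simp only [Matrix.mulVec, dotProduct, A, Matrix.of_apply, Pi.zero_apply]
            rw [← h2]
            exact Finset.sum_congr rfl (fun _ _ => mul_comm _ _)
          have h3 : c = 0 := by
            by_contra hc0
            exact hdet (Matrix.exists_mulVec_eq_zero_iff.mp ⟨c, hc0, h1⟩)
          rw [hc, h3]; simp
        · exact D.comb_inv _ _ _ (fun ν _ => (hpl ν (D.mem_Sd.mp ν.2).1).1)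
        · exact comb_deg _ _ _ d (fun ν _ => D.pl_deg hpl ν.2)
        · intro μ' hμ' hne
          have h1 : eval (ρt t + toV μ') (Q t) = (A t * (A t).adjugate) ⟨μ', hμ'⟩ l0 := by
            simp only [Q, map_sum, map_mul, eval_C, Matrix.mul_apply, A, Matrix.of_apply]
            exact Finset.sum_congr rfl (fun _ _ => mul_comm _ _)
          rw [h1, Matrix.mul_adjugate, Matrix.smul_apply, Matrix.one_apply_ne, smul_zero]
          intro h; exact hne (congrArg Subtype.val h)
      simp only [F, this, mul_zero]
  have hρ0 : ρt 0 = ρ := by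
    funext i; simp [ρt]
  have hdet0 : (A 0).det ≠ 0 := by
    intro h0
    obtain ⟨c, hc0, hc⟩ := Matrix.exists_mulVec_eq_zero_iff.mpr h0
    apply hc0
    have h1 := D.LI hpl (D.Sd d) (fun ν hν => (D.mem_Sd.mp hν).1)
      (fun ν => if h : ν ∈ D.Sd d then c ⟨ν, h⟩ else 0) (by
        intro ν hν
        have h2 := congrFun hc ⟨ν, hν⟩
        simp only [Matrix.mulVec, dotProduct, A, Matrix.of_apply, Pi.zero_apply, hρ0] at h2
        rw [← Finset.sum_coe_sort, ← h2]
        apply Finset.sum_congr rfl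
        intro ν' _
        simp [mul_comm])
    funext ν
    have := h1 ν ν.2
    simpa using this
  have hadj : ∀ ν, (A 0).adjugate ν l0 = (A 0).det * if ν = l0 then 1 else 0 := by
    intro ν
    have h1 : ((A 0).adjugate * A 0) ν l0 = (A 0).adjugate ν l0 := by
      rw [Matrix.mul_apply, Finset.sum_eq_single l0]
      · simp only [A, Matrix.of_apply, hρ0]
        rw [(hpl lam hlam).2.2 lam hlam le_rfl, if_pos rfl, mul_one]
      · intro ν' _ hne
        have hν' := D.mem_Sd.mp ν'.2
        simp only [A, Matrix.of_apply, hρ0]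
        rw [(hpl lam hlam).2.2 ν' hν'.1 (by omega), if_neg, mul_zero]
        intro h; exact hne (Subtype.ext h)
      · intro h; exact absurd (Finset.mem_univ _) h
    rw [← h1, Matrix.adjugate_mul, Matrix.smul_apply, Matrix.one_apply, smul_eq_mul]
  have hFv : F 0 = (A 0).det * ((A 0).det * eval (ρ + toV μ) (pl lam)) := by
    simp only [F, Q, map_sum, map_mul, eval_C, hadj, hρ0]
    congr 1
    rw [Finset.sum_eq_single l0]
    · simp [l0]
    · intro ν _ hne; simp [hne]
    · intro h; exact absurd (Finset.mem_univ _) h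
  rw [hF0] at hFv
  have h1 := (mul_eq_zero.mp hFv.symm).resolve_left hdet0
  exact (mul_eq_zero.mp h1).resolve_left hdet0

end Data

theorem final (D : Data ι) (hC0 : D.C0)
    (ρ : ι → ℂ) (hρ : D.InV0 ρ)
    (pl : (ι → ℤ) → MvPolynomial ι ℂ)
    (hpl : ∀ lam : ι → ℤ, lam ∈ LamPlus → D.CapelliAt ρ lam (pl lam))
    (h : MvPolynomial ι ℂ) (hh : D.WInv h)
    (μ : ι → ℤ) (hμ : μ ∈ LamPlus)
    (a : (ι → ℤ) → ℂ) (hafin : (Function.support a).Finite)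
    (ha0 : ∀ η : ι → ℤ, μ + η ∉ LamPlus → a η = 0)
    (haexp : ∀ z : ι → ℂ,
      eval z h * eval z (pl μ) = ∑ᶠ η : ι → ℤ, a η * eval z (pl (μ + η)))
    (η : ι → ℤ) (hη : a η ≠ 0) :
    η ∈ D.Lam ∧ pairZ D.ell η ≤ (h.totalDegree : ℤ) := by
  have hmem : ∀ η, a η ≠ 0 → μ + η ∈ LamPlus := fun η hη => by
    by_contra hcon; exact hη (ha0 η hcon)
  have hexp : ∀ z : ι → ℂ, eval z h * eval z (pl μ) =
      ∑ η ∈ hafin.toFinset, a η * eval z (pl (μ + η)) := by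
    intro z
    rw [haexp]
    apply finsum_eq_sum_of_support_subset
    intro x hx
    simp only [Function.mem_support] at hx
    simpa using left_ne_zero_of_mul hx
  constructor
  · by_contra hnot
    have key : ∀ n : ℕ, ∀ η, a η ≠ 0 → η ∉ D.Lam → (pairZ D.ell (μ + η)).toNat = n → False := by
      intro n
      induction n using Nat.strong_induction_on with
      | _ n ih =>
        intro η hη hnot hn
        have hmη := hmem η hη
        have h1 := hexp (ρ + toV (μ + η))
        rw [D.extra hC0 hρ hpl hμ hmη (by rwa [add_sub_cancel_left]), mul_zero,
          Finset.sum_eq_single η] at h1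
        · rw [(hpl _ hmη).2.2 _ hmη le_rfl, if_pos rfl, mul_one] at h1
          exact hη h1.symm
        · intro η' hη' hne
          have hη'' : a η' ≠ 0 := by simpa using hη'
          have hmη' := hmem η' hη''
          by_cases hl : η - η' ∈ D.Lam
          · have hnot' : η' ∉ D.Lam := by
              intro h2
              apply hnot
              have := D.Lam.add_mem hl h2
              rwa [sub_add_cancel] at this
            by_cases hlt : pairZ D.ell (μ + η') < pairZ D.ell (μ + η)
            · exfalso
              have h2 := D.ell_nonneg hmη'
              exact ih _ (by omega) η' hη'' hnot' rfl
            · rw [(hpl _ hmη').2.2 _ hmη (by omega), if_neg, mul_zero]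
              intro h3
              exact hne (add_left_cancel h3).symm
          · rw [D.extra hC0 hρ hpl hmη' hmη (by rwa [add_sub_add_left_eq_sub]), mul_zero]
        · intro h2
          exact absurd (by simpa using hη) h2
    exact key _ η hη hnot rfl
  · by_contra hlt
    push Not at hlt
    have hμ0 := D.ell_nonneg hμ
    obtain ⟨m, hm⟩ : ∃ m : ℕ, pairZ D.ell μ = m := ⟨(pairZ D.ell μ).toNat, by omega⟩
    have hdμ := (hpl μ hμ).2.1
    have hWp : D.WInv (h * pl μ) := by
      intro w hw z
      rw [map_mul, map_mul, hh w hw, (hpl μ hμ).1 w hw]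
    obtain ⟨c, hc⟩ := D.span hC0 hpl (d := h.totalDegree + m) hWp
      ((totalDegree_mul _ _).trans (by omega))
    set S : Finset (ι → ℤ) := D.Sd (h.totalDegree + m) ∪ hafin.toFinset.image (fun x => μ + x)
      with hS
    have hSL : ∀ ν ∈ S, ν ∈ LamPlus := by
      intro ν hν
      rw [hS, Finset.mem_union, Finset.mem_image] at hν
      rcases hν with hν | ⟨x, hx, rfl⟩
      · exact (D.mem_Sd.mp hν).1
      · exact hmem x (by simpa using hx)
    have hLI := D.LI hpl S hSL
      (fun ν => (if h : ν ∈ D.Sd (h.totalDegree + m) then c ⟨ν, h⟩ else 0) - a (ν - μ)) (by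
        intro ν _
        simp only [sub_mul, Finset.sum_sub_distrib]
        have h1 : ∑ x ∈ S, (if h : x ∈ D.Sd (h.totalDegree + m) then c ⟨x, h⟩ else 0)
            * eval (ρ + toV ν) (pl x) = eval (ρ + toV ν) (h * pl μ) := by
          rw [hc, map_sum, ← Finset.sum_subset (Finset.subset_union_left :
            D.Sd (h.totalDegree + m) ⊆ S), ← Finset.sum_coe_sort]
          · apply Finset.sum_congr rfl
            intro ν' _
            simp
          · intro x _ hx
            rw [dif_neg hx, zero_mul]
        have h2 : ∑ x ∈ S, a (x - μ) * eval (ρ + toV ν) (pl x) = eval (ρ + toV ν) (h * pl μ) := by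
          rw [map_mul, hexp, ← Finset.sum_subset (Finset.subset_union_right :
            hafin.toFinset.image (fun x => μ + x) ⊆ S), Finset.sum_image]
          · apply Finset.sum_congr rfl
            intro x _
            rw [add_sub_cancel_left]
          · intro x _ y _ hxy
            exact add_left_cancel hxy
          · intro x _ hx
            have : a (x - μ) = 0 := by
              by_contra h3
              apply hx
              rw [Finset.mem_image]
              exact ⟨x - μ, by simpa using h3, by simp⟩
            rw [this, zero_mul]
        rw [h1, h2, sub_self])
    have h3 := hLI (μ + η) (by
      rw [hS, Finset.mem_union, Finset.mem_image]
      exact Or.inr ⟨η, by simpa using hη, rfl⟩)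
    rw [dif_neg, add_sub_cancel_left, zero_sub, neg_eq_zero] at h3
    · exact hη h3
    · rw [D.mem_Sd, pairZ_add_right]
      push_cast
      rintro ⟨_, h4⟩
      omega

/-- Proposition 3.1: assuming axiom C0, for dominant `ρ ∈ V₀`,
`h ∈ P^W` and `μ ∈ Λ₊`, the coefficients of `h·p_μ = Σ_η a_η^h(μ) p_{μ+η}`
vanish unless `η ∈ Λ` and `ℓ(η) ≤ deg h`. -/
theorem statement10 (D : Data ι) (hC0 : D.C0)
    (ρ : ι → ℂ) (hρ : D.InV0 ρ) (hdom : D.Dominant ρ)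
    (pl : (ι → ℤ) → MvPolynomial ι ℂ)
    (hpl : ∀ lam : ι → ℤ, lam ∈ LamPlus → D.CapelliAt ρ lam (pl lam))
    (h : MvPolynomial ι ℂ) (hh : D.WInv h)
    (μ : ι → ℤ) (hμ : μ ∈ LamPlus)
    (a : (ι → ℤ) → ℂ) (hafin : (Function.support a).Finite)
    (ha0 : ∀ η : ι → ℤ, μ + η ∉ LamPlus → a η = 0)
    (haexp : ∀ z : ι → ℂ,
      eval z h * eval z (pl μ) = ∑ᶠ η : ι → ℤ, a η * eval z (pl (μ + η)))
    (η : ι → ℤ) (hη : a η ≠ 0) :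
    η ∈ D.Lam ∧ pairZ D.ell η ≤ (h.totalDegree : ℤ) := by
  exact final D hC0 ρ hρ pl hpl h hh μ hμ a hafin ha0 haexp η hη

end Knop

end
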